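/- Let h_1, …, h_l ∈ K[z_n] with h_1 | h_2 | ⋯ | h_l, let V ∈ K[z_2, …, z_n]^{l×l} be a unimodular matrix, and set B = diag(h_1, …, h_l) · V · diag(1, …, 1, z_1). If for every k = 1, …, l−1 the product h_1⋯h_k is a greatest common divisor of the k×k minors of B and J_k(B) = R, then B is equivalent to diag(h_1, h_2, …, h_{l−1}, z_1 h_l). -/

import Mathlib

open MvPolynomial Matrix

section Defs

variable {A : Type*} [CommRing A]

/-- The set of all `k × k` minors of a matrix. -/
def minorsSet {l m : ℕ} (F : Matrix (Fin l) (Fin m) A) (k : ℕ) : Set A :=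
  { p | ∃ (r : Fin k ↪ Fin l) (c : Fin k ↪ Fin m), p = (F.submatrix ⇑r ⇑c).det }

/-- `d` is a greatest common divisor of the `k × k` minors of `F`. -/
def IsGcdMinors {l m : ℕ} (F : Matrix (Fin l) (Fin m) A) (k : ℕ) (d : A) : Prop :=
  (∀ p ∈ minorsSet F k, d ∣ p) ∧ ∀ e : A, (∀ p ∈ minorsSet F k, e ∣ p) → e ∣ d

/-- The ideal generated by the `k × k` reduced minors of `F`, relative to a gcd `d`
of the `k × k` minors (the reduced minors are the `v` with `d * v` a minor). -/
def reducedIdeal {l m : ℕ} (F : Matrix (Fin l) (Fin m) A) (k : ℕ) (d : A) : Ideal A :=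
  Ideal.span { v : A | d * v ∈ minorsSet F k }

/-- `J_k(F) = R`: the `k × k` reduced minors of `F` generate the unit ideal. -/
def JkUnit {l m : ℕ} (F : Matrix (Fin l) (Fin m) A) (k : ℕ) : Prop :=
  ∃ d : A, IsGcdMinors F k d ∧ reducedIdeal F k d = ⊤

/-- `F` has rank `r`: some `r × r` minor is nonzero and all `(r+1) × (r+1)` minors vanish. -/
def HasRank {l m : ℕ} (F : Matrix (Fin l) (Fin m) A) (r : ℕ) : Prop :=
  (∃ p ∈ minorsSet F r, p ≠ 0) ∧ ∀ p ∈ minorsSet F (r + 1), p = 0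

/-- Equivalence of matrices: `F₁ = U * F₂ * V` for unimodular `U`, `V`. -/
def MatEquiv {l m : ℕ} (F₁ F₂ : Matrix (Fin l) (Fin m) A) : Prop :=
  ∃ (U : Matrix (Fin l) (Fin l) A) (V : Matrix (Fin m) (Fin m) A),
    IsUnit U.det ∧ IsUnit V.det ∧ F₁ = U * F₂ * V

/-- The rectangular diagonal matrix with diagonal entries `Φ`. -/
def smithDiag {l m : ℕ} (Φ : Fin l → A) : Matrix (Fin l) (Fin m) A :=
  Matrix.of fun i j => if (i : ℕ) = (j : ℕ) then Φ i else 0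

/-- `F` (of rank `r`) is equivalent to its Smith form: there are diagonal entries `Φ` such that
for each `i ≤ r` the product `Φ_1 ⋯ Φ_i` is a gcd of the `i × i` minors of `F`
(i.e. `Φ_i = d_i(F)/d_{i-1}(F)`), `Φ_i = 0` for `i > r`, and `F` is equivalent to
the diagonal matrix with entries `Φ`. -/
def SmithEquivAt {l m : ℕ} (F : Matrix (Fin l) (Fin m) A) (r : ℕ) : Prop :=
  ∃ Φ : Fin l → A,
    (∀ i : Fin l, (i : ℕ) < r →
      IsGcdMinors F ((i : ℕ) + 1) (∏ j ∈ Finset.Iic i, Φ j)) ∧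
    (∀ i : Fin l, r ≤ (i : ℕ) → Φ i = 0) ∧
    MatEquiv F (smithDiag Φ)

/-- `F` is equivalent to its Smith form. -/
def EquivToSmith {l m : ℕ} (F : Matrix (Fin l) (Fin m) A) : Prop :=
  ∃ r : ℕ, HasRank F r ∧ SmithEquivAt F r

end Defs

set_option linter.unusedSectionVars false


section Rows
variable {S T : Type*} [CommRing S] [CommRing T] {ι : Type*} [Fintype ι] [DecidableEq ι]

def RowRel (ρ : S →+* T) (f g : ι → S) : Prop :=
  ∃ R : Matrix ι ι S, IsUnit R.det ∧ ∀ j, ρ ((f ᵥ* R) j) = ρ (g j)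

def UniRow (ρ : S →+* T) (f : ι → S) : Prop := ∃ g : ι → S, ρ (f ⬝ᵥ g) = 1

theorem map_vecMul_eq (ρ : S →+* T) (f : ι → S) (R : Matrix ι ι S) (j : ι) :
    ρ ((f ᵥ* R) j) = ((ρ ∘ f) ᵥ* (R.map ρ)) j := by
  simp [Matrix.vecMul, dotProduct, map_sum]

theorem RowRel.of_eq {ρ : S →+* T} {f g : ι → S} (h : ∀ j, ρ (f j) = ρ (g j)) : RowRel ρ f g :=
  ⟨1, by simp, by simpa using h⟩

theorem RowRel.refl (ρ : S →+* T) (f : ι → S) : RowRel ρ f f := RowRel.of_eq fun _ => rfl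

theorem RowRel.trans {ρ : S →+* T} {f g h : ι → S} (h1 : RowRel ρ f g) (h2 : RowRel ρ g h) :
    RowRel ρ f h := by
  obtain ⟨R, hR, e⟩ := h1
  obtain ⟨R', hR', e'⟩ := h2
  refine ⟨R * R', by rw [det_mul]; exact hR.mul hR', fun j => ?_⟩
  rw [← e', ← Matrix.vecMul_vecMul, map_vecMul_eq, map_vecMul_eq]
  have : ρ ∘ (f ᵥ* R) = ρ ∘ g := funext e
  rw [this]

theorem RowRel.symm {ρ : S →+* T} {f g : ι → S} (h1 : RowRel ρ f g) : RowRel ρ g f := by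
  obtain ⟨R, hR, e⟩ := h1
  refine ⟨R⁻¹, by rw [Matrix.det_nonsing_inv]; exact hR.ringInverse, fun j => ?_⟩
  have h2 : ρ ∘ (f ᵥ* R) = ρ ∘ g := funext e
  rw [map_vecMul_eq, ← h2, ← map_vecMul_eq, Matrix.vecMul_vecMul, Matrix.mul_nonsing_inv _ hR,
    Matrix.vecMul_one]

theorem RowRel.elem (ρ : S →+* T) (f u w : ι → S) (h : w ⬝ᵥ u = 0) :
    RowRel ρ f (f + (f ⬝ᵥ u) • w) := by
  refine ⟨1 + vecMulVec u w, ?_, fun j => ?_⟩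
  · rw [vecMulVec_eq Unit, Matrix.det_one_add_replicateCol_mul_replicateRow, h]; simp
  · rw [Matrix.vecMul_add, Matrix.vecMul_one, Matrix.vecMul_vecMulVec]

theorem UniRow.rel {ρ : S →+* T} {f g : ι → S} (hf : UniRow ρ f) (h : RowRel ρ f g) :
    UniRow ρ g := by
  obtain ⟨R, hR, e⟩ := h.symm
  obtain ⟨x, hx⟩ := hf
  refine ⟨R *ᵥ x, ?_⟩
  rw [Matrix.dotProduct_mulVec, ← hx]
  simp only [dotProduct, map_sum, map_mul, e]

theorem RowRel.of_unit {ρ : S →+* T} {f : ι → S} {i₀ i₁ : ι} (h01 : i₀ ≠ i₁) (i : ι) (u : S)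
    (hu : ρ (f i * u) = 1) : RowRel ρ f (Pi.single i₀ 1) := by
  have clear : ∀ f : ι → S, ρ (f i₀) = 1 → RowRel ρ f (Pi.single i₀ 1) := by
    intro f hf
    refine (RowRel.elem ρ f (Pi.single i₀ 1) (fun j => if j = i₀ then 0 else - f j) (by simp)).trans
      (RowRel.of_eq fun j => ?_)
    by_cases hj : j = i₀
    · subst hj; simp [hf]
    · simp [hj, hf]
  have main : ∀ (f : ι → S) (i : ι) (u : S), i ≠ i₀ → ρ (f i * u) = 1 →
      RowRel ρ f (Pi.single i₀ 1) := by
    intro f i u hi hu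
    refine (RowRel.elem ρ f (Pi.single i u) (Pi.single i₀ (1 - f i₀)) (by simp [hi])).trans
      (clear _ ?_)
    simp only [Pi.add_apply, Pi.smul_apply, dotProduct_single, Pi.single_eq_same, smul_eq_mul,
      map_add, map_mul ρ (f i * u), hu, map_sub, map_one]
    ring
  by_cases hi : i = i₀
  · subst hi
    refine (RowRel.elem ρ f (Pi.single i u) (Pi.single i₁ (1 - f i₁)) (by simp [h01])).trans
      (main _ i₁ 1 h01.symm ?_)
    simp only [Pi.add_apply, Pi.smul_apply, dotProduct_single, Pi.single_eq_same, smul_eq_mul,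
      map_add, map_mul ρ (f i * u), hu, map_sub, map_one, mul_one]
    ring
  · exact main f i u hi hu

/-- transport along ring homs -/
theorem RowRel.map {S' T' : Type*} [CommRing S'] [CommRing T'] {ρ : S →+* T} {ρ' : S' →+* T'}
    (e : S →+* S') (e' : T →+* T') (h : ρ'.comp e = e'.comp ρ) {f g : ι → S}
    (H : RowRel ρ f g) : RowRel ρ' (e ∘ f) (e ∘ g) := by
  obtain ⟨R, hR, H⟩ := H
  refine ⟨R.map e, ?_, fun j => ?_⟩
  · have : (R.map e).det = e R.det := by rw [RingHom.map_det]; rfl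
    rw [this]; exact hR.map e
  · rw [← map_vecMul_eq]
    have h2 := RingHom.congr_fun h
    simp only [RingHom.comp_apply, Function.comp] at h2 ⊢
    rw [h2, h2, H]

theorem UniRow.map {S' T' : Type*} [CommRing S'] [CommRing T'] {ρ : S →+* T} {ρ' : S' →+* T'}
    (e : S →+* S') (e' : T →+* T') (h : ρ'.comp e = e'.comp ρ) {f : ι → S}
    (H : UniRow ρ f) : UniRow ρ' (e ∘ f) := by
  obtain ⟨g, H⟩ := H
  refine ⟨e ∘ g, ?_⟩
  have h2 := RingHom.congr_fun h (f ⬝ᵥ g)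
  simp only [RingHom.comp_apply, H, map_one] at h2
  rw [← h2]
  simp [dotProduct, map_sum]

def RowLift (ρ : S →+* T) (ι : Type*) [Fintype ι] [DecidableEq ι] (i₀ : ι) : Prop :=
  ∀ f : ι → S, UniRow ρ f → RowRel ρ f (Pi.single i₀ 1)

end Rows

section Suslin
variable {C T : Type*} [CommRing C] [IsDomain C] [CommRing T] {κ : Type*} [Fintype κ] [DecidableEq κ]
open Polynomial

theorem suslin_two {D T : Type*} [CommRing D] [IsDomain D] [CommRing T] (ρ : D →+* T) (c : D)
    (hc : c ≠ 0) (f f' : Fin 2 ⊕ κ → D) (g g' : Fin 2 → D)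
    (h : f (Sum.inl 0) * g 0 + f (Sum.inl 1) * g 1 = c)
    (h' : f' (Sum.inl 0) * g' 0 + f' (Sum.inl 1) * g' 1 = c)
    (hf : ∀ i, c ∣ f' i - f i) (hg : ∀ i, c ∣ g' i - g i) : RowRel ρ f f' := by
  choose df hdf using hf
  choose dg hdg using hg
  have e0 : f' (Sum.inl 0) = f (Sum.inl 0) + c * df (Sum.inl 0) := by linear_combination hdf (Sum.inl 0)
  have e1 : f' (Sum.inl 1) = f (Sum.inl 1) + c * df (Sum.inl 1) := by linear_combination hdf (Sum.inl 1)
  have k0 : g' 0 = g 0 + c * dg 0 := by linear_combination hdg 0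
  have k1 : g' 1 = g 1 + c * dg 1 := by linear_combination hdg 1
  set a := f (Sum.inl 0)
  set b := f (Sum.inl 1)
  let M : Matrix (Fin 2) (Fin 2) D :=
    !![1 + g 0 * df (Sum.inl 0) + b * dg 1, g 0 * df (Sum.inl 1) - b * dg 0;
       g 1 * df (Sum.inl 0) - a * dg 1, 1 + g 1 * df (Sum.inl 1) + a * dg 0]
  let X : Matrix (Fin 2) κ D := fun i j => g i * df (Sum.inr j)
  refine ⟨fromBlocks M X 0 1, ?_, fun j => ?_⟩
  · have : M.det = 1 := by
      have m00 : c * M 0 0 = g 0 * f' (Sum.inl 0) + b * g' 1 := by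
        simp only [M, Matrix.of_apply, Matrix.cons_val_zero]; rw [e0, k1]; linear_combination -h
      have m01 : c * M 0 1 = g 0 * f' (Sum.inl 1) - b * g' 0 := by
        simp only [M, Matrix.of_apply, Matrix.cons_val_zero, Matrix.cons_val_one]
        rw [e1, k0]; ring
      have m10 : c * M 1 0 = g 1 * f' (Sum.inl 0) - a * g' 1 := by
        simp only [M, Matrix.of_apply, Matrix.cons_val_zero, Matrix.cons_val_one]
        rw [e0, k1]; ring
      have m11 : c * M 1 1 = g 1 * f' (Sum.inl 1) + a * g' 0 := by
        change c * (1 + g 1 * df (Sum.inl 1) + a * dg 0) = _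
        rw [e1, k0]; linear_combination -h
      have : c * (c * M.det) = c * (c * 1) := by
        rw [Matrix.det_fin_two]
        calc _ = (c * M 0 0) * (c * M 1 1) - (c * M 0 1) * (c * M 1 0) := by ring
          _ = (a * g 0 + b * g 1) * (f' (Sum.inl 0) * g' 0 + f' (Sum.inl 1) * g' 1) := by
            rw [m00, m01, m10, m11]; ring
          _ = _ := by rw [h, h']; ring
      exact mul_left_cancel₀ hc (mul_left_cancel₀ hc this)
    rw [Matrix.det_fromBlocks_zero₂₁, this]; simp
  · congr 1
    rw [Matrix.vecMul_fromBlocks]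
    rcases j with j | j
    · fin_cases j
      · simp only [Sum.elim_inl, Matrix.vecMul, dotProduct, Fin.sum_univ_two, Pi.add_apply]
        simp only [Matrix.zero_apply, mul_zero, Finset.sum_const_zero, add_zero]
        change a * M 0 0 + b * M 1 0 = f' (Sum.inl 0)
        rw [e0]
        change a * (1 + g 0 * df (Sum.inl 0) + b * dg 1) + b * (g 1 * df (Sum.inl 0) - a * dg 1) = _
        linear_combination df (Sum.inl 0) * h
      · simp only [Sum.elim_inl, Matrix.vecMul, dotProduct, Fin.sum_univ_two, Pi.add_apply]
        simp only [Matrix.zero_apply, mul_zero, Finset.sum_const_zero, add_zero]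
        change a * M 0 1 + b * M 1 1 = f' (Sum.inl 1)
        rw [e1]
        change a * (g 0 * df (Sum.inl 1) - b * dg 0) + b * (1 + g 1 * df (Sum.inl 1) + a * dg 0) = _
        linear_combination df (Sum.inl 1) * h
    · simp [Matrix.vecMul, dotProduct, X, Fin.sum_univ_two]
      linear_combination -hdf (Sum.inr j) + df (Sum.inr j) * h

end Suslin


section Avoid
theorem avoid_one {D : Type*} [CommRing D] [IsDomain D] [UniqueFactorizationMonoid D] (f : D)
    (hf : f ≠ 0) (u v : D) :
    ∃ c : D, ∀ p, Prime p → p ∣ f → p ∣ u + c * v → p ∣ u ∧ p ∣ v := by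
  classical
  let s := (UniqueFactorizationMonoid.factors f).filter (fun p => ¬ p ∣ u)
  refine ⟨s.prod, fun p hp hpf h => ?_⟩
  by_cases hu : p ∣ u
  · refine ⟨hu, ?_⟩
    have h2 : p ∣ s.prod * v := (dvd_add_right hu).1 h
    rcases hp.dvd_or_dvd h2 with h3 | h3
    · obtain ⟨a, ha, hpa⟩ := hp.exists_mem_multiset_dvd h3
      rw [Multiset.mem_filter] at ha
      have hpr := UniqueFactorizationMonoid.prime_of_factor a ha.1
      exact absurd ((hp.associated_of_dvd hpr hpa).symm.dvd.trans hu) ha.2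
    · exact h3
  · exfalso
    obtain ⟨q, hq, hpq⟩ := UniqueFactorizationMonoid.exists_mem_factors_of_dvd hf hp.irreducible hpf
    have hqs : q ∈ s := Multiset.mem_filter.2 ⟨hq, fun h => hu (hpq.dvd.trans h)⟩
    have : p ∣ s.prod * v := (hpq.dvd.trans (Multiset.dvd_prod hqs)).mul_right v
    exact hu ((dvd_add_left this).1 h)

theorem avoid_many {D : Type*} [CommRing D] [IsDomain D] [UniqueFactorizationMonoid D] (f : D)
    (hf : f ≠ 0) {κ : Type*} [DecidableEq κ] (s : Finset κ) (u : D) (v : κ → D) :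
    ∃ c : κ → D, ∀ p, Prime p → p ∣ f → p ∣ u + ∑ j ∈ s, c j * v j → p ∣ u ∧ ∀ j ∈ s, p ∣ v j := by
  induction s using Finset.induction_on with
  | empty => exact ⟨0, fun p _ _ h => ⟨by simpa using h, by simp⟩⟩
  | insert a s ha ih =>
    obtain ⟨c, hc⟩ := ih
    obtain ⟨d, hd⟩ := avoid_one f hf (u + ∑ j ∈ s, c j * v j) (v a)
    refine ⟨Function.update c a d, fun p hp hpf h => ?_⟩
    rw [Finset.sum_insert ha, Function.update_self] at h
    have e : ∑ j ∈ s, Function.update c a d j * v j = ∑ j ∈ s, c j * v j := by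
      refine Finset.sum_congr rfl fun j hj => ?_
      rw [Function.update_of_ne]
      rintro rfl; exact ha hj
    rw [e] at h
    obtain ⟨h1, h2⟩ := hd p hp hpf (by convert h using 1; ring)
    obtain ⟨h3, h4⟩ := hc p hp hpf h1
    refine ⟨h3, fun j hj => ?_⟩
    rcases Finset.mem_insert.1 hj with rfl | hj
    · exact h2
    · exact h4 j hj
end Avoid

section Suslin
open Polynomial
variable {C : Type*} [CommRing C]

theorem comp_sub_dvd (p b b' : C[X]) : b - b' ∣ p.comp b - p.comp b' := by
  have := Polynomial.sub_dvd_eval_sub b b' (p.map Polynomial.C)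
  simpa [Polynomial.comp, Polynomial.eval₂_eq_eval_map] using this

theorem nakayama_span (m : Ideal C) (f g : C[X]) (hf : f.Monic)
    (hco : IsCoprime (f.map (Ideal.Quotient.mk m)) (g.map (Ideal.Quotient.mk m))) :
    ∃ s : C, s - 1 ∈ m ∧ ∃ a b : C[X], f * a + g * b = Polynomial.C s := by
  let I : Ideal C[X] := Ideal.span {f, g}
  have hle : Ideal.span {f} ≤ I := Ideal.span_mono (by simp)
  have : Module.Finite C (C[X] ⧸ Ideal.span {f}) := hf.finite_quotient
  have : Module.Finite C (C[X] ⧸ I) :=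
    Module.Finite.of_surjective (Ideal.Quotient.factorₐ C hle).toLinearMap
      (Ideal.Quotient.factor_surjective hle)
  obtain ⟨a, b, hab⟩ := hco
  obtain ⟨a, rfl⟩ := Polynomial.map_surjective _ Ideal.Quotient.mk_surjective a
  obtain ⟨b, rfl⟩ := Polynomial.map_surjective _ Ideal.Quotient.mk_surjective b
  have key : ∀ p : C[X], (∀ i, p.coeff i ∈ m) →
      Ideal.Quotient.mk I p ∈ m • (⊤ : Submodule C (C[X] ⧸ I)) := by
    intro p hp
    rw [p.as_sum_range_C_mul_X_pow, map_sum]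
    refine Submodule.sum_mem _ fun i _ => ?_
    rw [← Polynomial.smul_eq_C_mul]
    have : Ideal.Quotient.mk I (p.coeff i • (Polynomial.X : C[X]) ^ i) = p.coeff i • Ideal.Quotient.mk I (Polynomial.X ^ i) := rfl
    rw [this]
    exact Submodule.smul_mem_smul (hp i) trivial
  obtain ⟨r, hr, h2⟩ := Submodule.exists_sub_one_mem_and_smul_eq_zero_of_fg_of_le_smul m
    (⊤ : Submodule C (C[X] ⧸ I)) Module.Finite.fg_top (by
      intro x _
      obtain ⟨p, rfl⟩ := Ideal.Quotient.mk_surjective x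
      have e : Ideal.Quotient.mk I p = Ideal.Quotient.mk I (p * (1 - (a * f + b * g))) := by
        rw [Ideal.Quotient.eq]
        have : p - p * (1 - (a * f + b * g)) = (p * a) * f + (p * b) * g := by ring
        rw [this]
        exact Ideal.mem_span_pair.2 ⟨_, _, rfl⟩
      rw [e]
      apply key
      intro i
      rw [← Ideal.Quotient.eq_zero_iff_mem, ← Polynomial.coeff_map, Polynomial.map_mul,
        Polynomial.map_sub, Polynomial.map_add, Polynomial.map_mul, Polynomial.map_mul, hab]
      simp)
  have h3 := h2 (Ideal.Quotient.mk I 1) trivial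
  have h4 : Ideal.Quotient.mk I (r • 1) = 0 := h3
  rw [Ideal.Quotient.eq_zero_iff_mem, Polynomial.smul_eq_C_mul, mul_one, Ideal.mem_span_pair] at h4
  obtain ⟨x, y, hxy⟩ := h4
  exact ⟨r, hr, x, y, by rw [← hxy]; ring⟩

theorem suslin [IsDomain C] {T : Type*} [CommRing T] {κ : Type*} [Fintype κ] [DecidableEq κ]
    (ρ : C →+* T) (f : Fin 2 ⊕ κ → C[X]) (hf : (f (Sum.inl 0)).Monic)
    (hu : UniRow (Polynomial.mapRingHom ρ) f) :
    RowRel (Polynomial.mapRingHom ρ) f (fun i => Polynomial.C ((f i).eval 0)) := by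
  let J : Ideal C :=
    { carrier := {c | ∀ b b' : C[X], Polynomial.C c ∣ b - b' →
        RowRel (Polynomial.mapRingHom ρ) (fun i => (f i).comp b) (fun i => (f i).comp b')}
      zero_mem' := by
        intro b b' h
        rw [Polynomial.C_0, zero_dvd_iff, sub_eq_zero] at h
        rw [h]; exact RowRel.refl _ _
      add_mem' := by
        intro c d hc hd b b' h
        obtain ⟨x, hx⟩ := h
        refine (hc b (b' + Polynomial.C d * x) ⟨x, ?_⟩).trans (hd _ b' ⟨x, ?_⟩)
        · rw [Polynomial.C_add] at hx; linear_combination hx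
        · ring
      smul_mem' := by
        intro a c hc b b' h
        refine hc b b' (dvd_trans ?_ h)
        rw [smul_eq_mul, Polynomial.C_mul]
        exact dvd_mul_left _ _ }
  have hJ : J = ⊤ := by
    by_contra hJ
    obtain ⟨m, hm, hJm⟩ := Ideal.exists_le_maximal J hJ
    let _ := Ideal.Quotient.field m
    have hker : ∀ c, ρ c = 0 → c ∈ m := by
      intro c hc
      apply hJm
      intro b b' h
      refine RowRel.of_eq fun i => ?_
      obtain ⟨x, hx⟩ := h.trans (comp_sub_dvd (f i) b b')
      rw [← sub_eq_zero, ← map_sub, hx]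
      simp [hc]
    obtain ⟨g, hg⟩ := hu
    have hg' : ((f ⬝ᵥ g).map (Ideal.Quotient.mk m)) = 1 := by
      have : ∀ i, (f ⬝ᵥ g - 1).coeff i ∈ m := by
        intro i
        apply hker
        rw [← Polynomial.coeff_map, Polynomial.map_sub, ← Polynomial.coe_mapRingHom, hg]
        simp
      have h2 : (f ⬝ᵥ g - 1).map (Ideal.Quotient.mk m) = 0 := by
        ext i
        rw [Polynomial.coeff_map, Polynomial.coeff_zero]
        exact Ideal.Quotient.eq_zero_iff_mem.2 (this i)
      rw [Polynomial.map_sub, Polynomial.map_one, sub_eq_zero] at h2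
      exact h2
    set π := Polynomial.mapRingHom (Ideal.Quotient.mk m) with hπ
    have hπs : Function.Surjective π := Polynomial.map_surjective _ Ideal.Quotient.mk_surjective
    have h0 : π (f (Sum.inl 0)) ≠ 0 := (hf.map _).ne_zero
    obtain ⟨c, hc⟩ := avoid_many (π (f (Sum.inl 0))) h0 Finset.univ (π (f (Sum.inl 1)))
      (fun j : κ => π (f (Sum.inr j)))
    choose d hd using fun j => hπs (c j)
    let u : Fin 2 ⊕ κ → C[X] := Sum.elim 0 d
    let w : Fin 2 ⊕ κ → C[X] := Pi.single (Sum.inl 1) 1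
    let f2 := f + (f ⬝ᵥ u) • w
    have hfu : f ⬝ᵥ u = ∑ j, f (Sum.inr j) * d j := by
      simp [dotProduct, u, Fintype.sum_sum_type]
    have f20 : f2 (Sum.inl 0) = f (Sum.inl 0) := by simp [f2, w]
    have f21 : f2 (Sum.inl 1) = f (Sum.inl 1) + f ⬝ᵥ u := by simp [f2, w]
    have hco : IsCoprime (π (f (Sum.inl 0))) (π (f2 (Sum.inl 1))) := by
      refine isCoprime_of_prime_dvd (fun h => h0 h.1) fun p hp hp0 hp1 => ?_
      obtain ⟨h1, h2⟩ := hc p hp hp0 (by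
        rw [f21, hfu, map_add, map_sum] at hp1
        convert hp1 using 3
        rw [map_mul, hd, mul_comm])
      refine hp.not_dvd_one ?_
      have : (1 : (C ⧸ m)[X]) = ∑ i, π (f i) * π (g i) := by
        rw [← hg', ← Polynomial.coe_mapRingHom, ← hπ]
        simp only [dotProduct, map_sum, map_mul]
      rw [this]
      refine Finset.dvd_sum fun i _ => Dvd.dvd.mul_right ?_ _
      rcases i with i | i
      · fin_cases i
        · exact hp0
        · exact h1
      · exact h2 i (Finset.mem_univ _)
    obtain ⟨s, hs, a, b, hab⟩ := nakayama_span m _ _ hf hco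
    have hs0 : s ≠ 0 := by
      rintro rfl
      apply hm.ne_top
      rw [Ideal.eq_top_iff_one]
      simpa using m.neg_mem hs
    have hsJ : s ∈ J := by
      intro p p' hpp
      have step : ∀ p : C[X], RowRel (Polynomial.mapRingHom ρ) (fun i => (f i).comp p)
          (fun i => (f2 i).comp p) := by
        intro p
        have := RowRel.elem (Polynomial.mapRingHom ρ) (fun i => (f i).comp p)
          (fun i => (u i).comp p) w (by simp [w, u])
        convert this using 1
        funext i
        have e : (f ⬝ᵥ u).comp p = (fun i => (f i).comp p) ⬝ᵥ (fun i => (u i).comp p) := by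
          simp only [dotProduct]
          rw [← Polynomial.coe_compRingHom_apply, map_sum]
          simp
        by_cases hi : i = Sum.inl 1
        · subst hi; simp [f2, w, e]
        · simp [f2, w, hi]
      refine (step p).trans (RowRel.trans ?_ (step p').symm)
      have ev : ∀ q : C[X], (f2 (Sum.inl 0)).comp q * a.comp q + (f2 (Sum.inl 1)).comp q * b.comp q
          = Polynomial.C s := by
        intro q
        rw [f20, ← Polynomial.mul_comp, ← Polynomial.mul_comp, ← Polynomial.add_comp, hab,
          Polynomial.C_comp]
      have hpp' : Polynomial.C s ∣ p' - p := by rw [← neg_sub]; exact (dvd_neg).2 hpp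
      refine suslin_two _ (Polynomial.C s) (by simpa using hs0) _ _ ![a.comp p, b.comp p]
        ![a.comp p', b.comp p'] (ev p) (ev p') (fun i => hpp'.trans (comp_sub_dvd _ _ _)) ?_
      intro i
      fin_cases i
      · exact hpp'.trans (comp_sub_dvd _ _ _)
      · exact hpp'.trans (comp_sub_dvd _ _ _)
    have := m.sub_mem (hJm hsJ) hs
    apply hm.ne_top
    rw [Ideal.eq_top_iff_one]
    simpa using this
  have h1 : (1 : C) ∈ J := by rw [hJ]; trivial
  have := h1 Polynomial.X 0 (by simp)
  simpa [Polynomial.coeff_zero_eq_eval_zero] using this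

end Suslin


section Nagata
open Polynomial MvPolynomial Nat RingHom List

noncomputable def nagHom (A : Type*) [CommRing A] (n N : ℕ) (c : A) :
    MvPolynomial (Fin (n + 1)) A →ₐ[A] MvPolynomial (Fin (n + 1)) A :=
  MvPolynomial.aeval fun i ↦ if i = 0 then MvPolynomial.X 0
    else MvPolynomial.X i + c • MvPolynomial.X 0 ^ (N ^ i.1)

theorem nagHom_comp (A : Type*) [CommRing A] (n N : ℕ) (c : A) :
    (nagHom A n N c).comp (nagHom A n N (-c)) = AlgHom.id _ _ := by
  unfold nagHom
  rw [MvPolynomial.comp_aeval, ← MvPolynomial.aeval_X_left]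
  ext i v
  cases i using Fin.cases <;> simp

noncomputable def nagT (A : Type*) [CommRing A] (n N : ℕ) :
    MvPolynomial (Fin (n + 1)) A ≃ₐ[A] MvPolynomial (Fin (n + 1)) A :=
  AlgEquiv.ofAlgHom (nagHom A n N 1) (nagHom A n N (-1))
  (nagHom_comp A n N 1) (by simpa using nagHom_comp A n N (-1))

theorem nagT_X (A : Type*) [CommRing A] (n N : ℕ) (i : Fin (n + 1)) :
    nagT A n N (MvPolynomial.X i) = if i = 0 then MvPolynomial.X 0
      else MvPolynomial.X i + MvPolynomial.X 0 ^ (N ^ i.1) := by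
  simp [nagT, nagHom]

theorem nagT_C (A : Type*) [CommRing A] (n N : ℕ) (a : A) :
    nagT A n N (MvPolynomial.C a) = MvPolynomial.C a := by
  simp [nagT, nagHom]

variable {k : Type*} [Field k] {n : ℕ}

theorem nag_sum_ne (N : ℕ) (hN : 2 ≤ N) (v w : Fin (n + 1) →₀ ℕ) (vlt : ∀ i, v i < N)
    (wlt : ∀ i, w i < N) (ne : v ≠ w) :
    ∑ x : Fin (n + 1), N ^ x.1 * v x ≠ ∑ x : Fin (n + 1), N ^ x.1 * w x := by
  intro h
  refine ne <| Finsupp.ext <| congrFun <| ofFn_inj.mp ?_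
  apply ofDigits_inj_of_len_eq (b := N) (by omega)
    (by simp) (by grind) (by grind)
  simpa only [ofDigits_eq_sum_mapIdx, mapIdx_eq_ofFn, get_ofFn, length_ofFn,
    Fin.val_cast, mul_comm, sum_ofFn] using! h

theorem nag_natDegree (N : ℕ) (v : Fin (n + 1) →₀ ℕ) {a : k} (ha : a ≠ 0) :
    (finSuccEquiv k n ((nagT k n N) (MvPolynomial.monomial v a))).natDegree =
    ∑ i : Fin (n + 1), N ^ i.1 * v i := by
  rw [monomial_eq, Finsupp.prod_pow v fun a ↦ MvPolynomial.X a]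
  simp only [Fin.prod_univ_succ, Fin.sum_univ_succ, map_mul, map_prod, map_pow,
    nagT_C, nagT_X, if_pos, Fin.succ_ne_zero,
    ite_false, map_add, finSuccEquiv_X_zero, finSuccEquiv_X_succ]
  have h (i : Fin n) :
      (Polynomial.C (MvPolynomial.X (R := k) i) + Polynomial.X ^ (N ^ i.succ.1)) ^ v i.succ ≠ 0 :=
    pow_ne_zero (v i.succ) (leadingCoeff_ne_zero.mp <| by
      by_cases h0 : N ^ (i.succ : ℕ) = 0
      · rw [h0, pow_zero, ← Polynomial.C_1, ← Polynomial.C_add, Polynomial.leadingCoeff_C]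
        intro h
        have := congrArg (MvPolynomial.coeff (Finsupp.single i 1)) h
        rw [MvPolynomial.coeff_add, MvPolynomial.coeff_one, if_neg (by
          intro h; have := Finsupp.ext_iff.1 h i; simp at this)] at this
        simp at this
      · rw [add_comm, leadingCoeff_X_pow_add_C (Nat.pos_of_ne_zero h0)]; simp)
  rw [natDegree_mul (by simp [ha]) (mul_ne_zero (by simp) (Finset.prod_ne_zero_iff.mpr
    (fun i _ ↦ h i))), natDegree_mul (by simp) (Finset.prod_ne_zero_iff.mpr (fun i _ ↦ h i)),
    natDegree_prod _ _ (fun i _ ↦ h i), natDegree_finSuccEquiv, degreeOf_C]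
  simpa only [natDegree_pow, zero_add, natDegree_X, mul_one, Fin.val_zero, pow_zero, one_mul,
    add_right_inj] using Finset.sum_congr rfl (fun i _ ↦ by
    rw [add_comm (Polynomial.C _), natDegree_X_pow_add_C, mul_comm])

theorem nag_leadingCoeff_mon (N : ℕ) (hN : 2 ≤ N) (v : Fin (n + 1) →₀ ℕ) (a : k) :
    (finSuccEquiv k n ((nagT k n N) ((MvPolynomial.monomial v) a))).leadingCoeff =
    MvPolynomial.C a := by
  rw [monomial_eq, Finsupp.prod_fintype]
  · simp only [map_mul, map_prod, leadingCoeff_mul, leadingCoeff_prod]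
    have : ∀ j, ((finSuccEquiv k n) (nagT k n N (MvPolynomial.X j))).leadingCoeff = 1 := fun j ↦ by
      rw [nagT_X]
      by_cases h : j = 0
      · simp [h, finSuccEquiv_apply]
      · simp only [if_neg h, map_add, map_pow]
        obtain ⟨i, rfl⟩ := Fin.exists_succ_eq.mpr h
        have : N ^ (i.succ : ℕ) ≠ 0 := by positivity
        rw [finSuccEquiv_X_succ, finSuccEquiv_X_zero, add_comm,
          leadingCoeff_X_pow_add_C (Nat.pos_of_ne_zero this)]
    simp only [map_pow, leadingCoeff_pow, this, one_pow, Finset.prod_const_one, mul_one]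
    rw [nagT_C, finSuccEquiv_apply, eval₂Hom_C, coe_comp]
    simp
  exact fun i ↦ pow_zero _

theorem nag_leadingCoeff (f : MvPolynomial (Fin (n + 1)) k) (fne : f ≠ 0) :
    ∃ N : ℕ, ∃ c : k, c ≠ 0 ∧
      (finSuccEquiv k n (nagT k n N f)).leadingCoeff = MvPolynomial.C c := by
  obtain ⟨N, hNN⟩ : ∃ N, N = 2 + f.totalDegree := ⟨_, rfl⟩
  have hN : 2 ≤ N := by omega
  refine ⟨N, ?_⟩
  set h := fun w ↦ (MvPolynomial.monomial w) (MvPolynomial.coeff w f)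
  obtain ⟨v, vin, vs⟩ := Finset.exists_max_image f.support
    (fun v ↦ (finSuccEquiv k n (nagT k n N (h v))).natDegree) (support_nonempty.mpr fne)
  replace vs : ∀ x ∈ f.support \ {v}, (finSuccEquiv k n ((nagT k n N) (h x))).degree <
      (finSuccEquiv k n ((nagT k n N) (h v))).degree := by
    intro x hx
    obtain ⟨h1, h2⟩ := Finset.mem_sdiff.mp hx
    apply degree_lt_degree <| lt_of_le_of_ne (vs x h1) ?_
    rw [nag_natDegree N _ (MvPolynomial.mem_support_iff.mp h1),
      nag_natDegree N _ (MvPolynomial.mem_support_iff.mp vin)]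
    refine nag_sum_ne N hN x v (fun i ↦ ?_) (fun i ↦ ?_) (by simpa using h2) <;>
    exact lt_of_le_of_lt ((monomial_le_degreeOf i ‹_›).trans (degreeOf_le_totalDegree f i))
      (by lia)
  have coeff : (finSuccEquiv k n ((nagT k n N) (h v + ∑ x ∈ f.support \ {v}, h x))).leadingCoeff =
      (finSuccEquiv k n ((nagT k n N) (h v))).leadingCoeff := by
    simp only [map_add, map_sum]
    rw [add_comm]
    apply leadingCoeff_add_of_degree_lt <| (lt_of_le_of_lt <| degree_sum_le _ _) ?_
    have h2 : h v ≠ 0 := by simpa [h] using MvPolynomial.mem_support_iff.mp vin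
    replace h2 : (finSuccEquiv k n ((nagT k n N) (h v))) ≠ 0 := fun eq ↦ h2 <|
      by simpa only [map_eq_zero_iff _ (AlgEquiv.injective _)] using eq
    exact (Finset.sup_lt_iff <| Ne.bot_lt (fun x ↦ h2 <| degree_eq_bot.mp x)).mpr vs
  refine ⟨MvPolynomial.coeff v f, MvPolynomial.mem_support_iff.mp vin, ?_⟩
  conv_lhs => rw [← f.support_sum_monomial_coeff]
  rw [Finset.sum_eq_add_sum_sdiff_singleton_of_mem vin h, coeff]
  exact nag_leadingCoeff_mon N hN v _

theorem nagT_map {A B : Type*} [CommRing A] [CommRing B] (π : A →+* B) (N : ℕ)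
    (f : MvPolynomial (Fin (n + 1)) A) :
    MvPolynomial.map π (nagT A n N f) = nagT B n N (MvPolynomial.map π f) := by
  have : (MvPolynomial.map π).comp (nagT A n N : MvPolynomial (Fin (n + 1)) A →+* MvPolynomial (Fin (n + 1)) A)
      = (nagT B n N : MvPolynomial (Fin (n + 1)) B →+* MvPolynomial (Fin (n + 1)) B).comp (MvPolynomial.map π) := by
    apply MvPolynomial.ringHom_ext
    · intro a; simp [nagT_C]
    · intro i
      simp only [RingHom.comp_apply, RingHom.coe_coe, nagT_X, MvPolynomial.map_X]
      split_ifs <;> simp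
  exact RingHom.congr_fun this f

theorem finSuccEquiv_map {A B : Type*} [CommRing A] [CommRing B] (π : A →+* B)
    (f : MvPolynomial (Fin (n + 1)) A) :
    (finSuccEquiv A n f).map (MvPolynomial.map π) = finSuccEquiv B n (MvPolynomial.map π f) := by
  have : (Polynomial.mapRingHom (MvPolynomial.map π)).comp
      (finSuccEquiv A n : MvPolynomial (Fin (n + 1)) A →+* (MvPolynomial (Fin n) A)[X])
      = (finSuccEquiv B n : MvPolynomial (Fin (n + 1)) B →+* (MvPolynomial (Fin n) B)[X]).comp (MvPolynomial.map π) := by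
    apply MvPolynomial.ringHom_ext
    · intro a; simp [finSuccEquiv_apply]
    · intro i
      cases i using Fin.cases <;> simp [finSuccEquiv_X_zero, finSuccEquiv_X_succ]
  exact RingHom.congr_fun this f
end Nagata


section LiftMax
open Polynomial

theorem RowRel.smul {S T : Type*} [CommRing S] [CommRing T] {ι : Type*} [Fintype ι] [DecidableEq ι]
    {ρ : S →+* T} {f g : ι → S} (a : S) (h : RowRel ρ f g) : RowRel ρ (a • f) (a • g) := by
  obtain ⟨R, hR, e⟩ := h
  refine ⟨R, hR, fun j => ?_⟩
  rw [Matrix.smul_vecMul]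
  simp [e]

theorem UniRow.exists_ne {S T : Type*} [CommRing S] [CommRing T] [Nontrivial T] {ι : Type*}
    [Fintype ι] [DecidableEq ι] {ρ : S →+* T} {f : ι → S} (h : UniRow ρ f) : ∃ i, ρ (f i) ≠ 0 := by
  by_contra! hc
  obtain ⟨g, hg⟩ := h
  simp [dotProduct, map_sum, hc] at hg

variable {κ : Type*} [Fintype κ] [DecidableEq κ]

theorem lift_step {C D : Type*} [CommRing C] [IsDomain C] [CommRing D] (ρ : C →+* D)
    (hρ : Function.Surjective ρ) (ih : RowLift ρ (Fin 2 ⊕ κ) (Sum.inl 0))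
    (f : Fin 2 ⊕ κ → C[X]) (hf : UniRow (mapRingHom ρ) f) (c d : D) (hcd : d * c = 1)
    (hlead : (mapRingHom ρ (f (Sum.inl 0))).leadingCoeff = c) :
    RowRel (mapRingHom ρ) f (Pi.single (Sum.inl 0) 1) := by
  have h01 : (Sum.inl 0 : Fin 2 ⊕ κ) ≠ Sum.inl 1 := by simp
  obtain ⟨c', rfl⟩ := hρ c
  obtain ⟨d', rfl⟩ := hρ d
  have hmon : (Polynomial.C (ρ d') * mapRingHom ρ (f (Sum.inl 0))).Monic := by
    apply Polynomial.monic_C_mul_of_mul_leadingCoeff_eq_one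
    rw [hlead, hcd]
  obtain ⟨q, hq, -, hqm⟩ := Polynomial.lifts_and_natDegree_eq_and_monic
    (Polynomial.mem_lifts_of_surjective hρ _) hmon
  have hdc : (Polynomial.C (ρ d') : D[X]) * Polynomial.C (ρ c') = 1 := by
    rw [← Polynomial.C_mul, hcd, Polynomial.C_1]
  let F : Fin 2 ⊕ κ → C[X] := fun i => if i = Sum.inl 0 then q else Polynomial.C d' * f i
  have hF : ∀ i, mapRingHom ρ (F i) = Polynomial.C (ρ d') * mapRingHom ρ (f i) := by
    intro i
    by_cases hi : i = Sum.inl 0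
    · subst hi; simp only [F, if_pos]; exact hq
    · simp [F, hi]
  have hFm : (F (Sum.inl 0)).Monic := by simpa [F] using hqm
  have hFu : UniRow (mapRingHom ρ) F := by
    obtain ⟨g, hg⟩ := hf
    refine ⟨fun i => Polynomial.C c' * g i, ?_⟩
    rw [← hg]
    simp only [dotProduct, map_sum, map_mul, hF]
    refine Finset.sum_congr rfl fun i _ => ?_
    rw [coe_mapRingHom, Polynomial.map_C]
    linear_combination (Polynomial.map ρ (f i)) * (Polynomial.map ρ (g i)) * hdc
  have h1 := suslin ρ F hFm hFu
  have hk := hFu.rel h1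
  have hk2 : UniRow ρ (fun i => (F i).eval 0) := by
    have := hk.map (ρ' := ρ) (Polynomial.evalRingHom 0) (Polynomial.evalRingHom 0) (by
      refine RingHom.ext fun x => ?_
      simp only [RingHom.comp_apply, Polynomial.coe_evalRingHom, coe_mapRingHom]
      rw [← map_zero ρ, Polynomial.eval_map_apply])
    simpa [Function.comp_def] using this
  have h2 := (ih _ hk2).map (ρ' := mapRingHom ρ) Polynomial.C Polynomial.C (by
    refine RingHom.ext fun x => ?_
    simp)
  have h3 : RowRel (mapRingHom ρ) F (Pi.single (Sum.inl 0) 1) := by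
    refine h1.trans ?_
    have e : (Pi.single (Sum.inl 0) 1 : Fin 2 ⊕ κ → C[X])
        = Polynomial.C ∘ (Pi.single (Sum.inl 0) 1 : Fin 2 ⊕ κ → C) := by
      funext i
      by_cases hi : i = Sum.inl 0
      · subst hi; simp
      · simp [hi]
    rw [e]
    exact h2
  have h4 := h3.smul (Polynomial.C c')
  have h5 : RowRel (mapRingHom ρ) f (Polynomial.C c' • F) := by
    refine RowRel.of_eq fun i => ?_
    rw [Pi.smul_apply, smul_eq_mul, map_mul, hF, coe_mapRingHom, Polynomial.map_C]
    linear_combination -(Polynomial.map ρ (f i)) * hdc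
  refine (h5.trans h4).trans (RowRel.of_unit h01 (Sum.inl 0) (Polynomial.C d') ?_)
  simp only [Pi.smul_apply, Pi.single_eq_same, smul_eq_mul, mul_one, map_mul, coe_mapRingHom,
    Polynomial.map_C]
  rw [mul_comm]; exact hdc

theorem lift_max {A L : Type*} [CommRing A] [IsDomain A] [Field L] (π : A →+* L)
    (hπ : Function.Surjective π) (m : ℕ) :
    RowLift (MvPolynomial.map π : MvPolynomial (Fin m) A →+* MvPolynomial (Fin m) L)
      (Fin 2 ⊕ κ) (Sum.inl 0) := by
  have h01 : (Sum.inl 0 : Fin 2 ⊕ κ) ≠ Sum.inl 1 := by simp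
  induction m with
  | zero =>
    intro f hf
    obtain ⟨i, hi⟩ := hf.exists_ne
    rw [MvPolynomial.eq_C_of_isEmpty (MvPolynomial.map π (f i))] at hi
    obtain ⟨u, hu⟩ := hπ (MvPolynomial.coeff 0 (MvPolynomial.map π (f i)))⁻¹
    refine RowRel.of_unit h01 i (MvPolynomial.C u) ?_
    rw [map_mul, MvPolynomial.map_C, hu]
    conv_lhs => rw [MvPolynomial.eq_C_of_isEmpty (MvPolynomial.map π (f i))]
    rw [← MvPolynomial.C_mul, MvPolynomial.coeff_C, if_pos rfl, mul_inv_cancel₀, MvPolynomial.C_1]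
    intro h; apply hi; rw [h]; simp
  | succ m ih =>
    set ρ := (MvPolynomial.map π : MvPolynomial (Fin (m + 1)) A →+* MvPolynomial (Fin (m + 1)) L)
    set ρm := (MvPolynomial.map π : MvPolynomial (Fin m) A →+* MvPolynomial (Fin m) L)
    have core : ∀ f : Fin 2 ⊕ κ → MvPolynomial (Fin (m + 1)) A, UniRow ρ f →
        ρ (f (Sum.inl 0)) ≠ 0 → RowRel ρ f (Pi.single (Sum.inl 0) 1) := by
      intro f hf hf0
      obtain ⟨N, c, hc, hlead⟩ := nag_leadingCoeff _ hf0
      let E : MvPolynomial (Fin (m + 1)) A ≃+* (MvPolynomial (Fin m) A)[X] :=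
        ((nagT A m N).trans (MvPolynomial.finSuccEquiv A m)).toRingEquiv
      let EL : MvPolynomial (Fin (m + 1)) L ≃+* (MvPolynomial (Fin m) L)[X] :=
        ((nagT L m N).trans (MvPolynomial.finSuccEquiv L m)).toRingEquiv
      have hE : ∀ x, mapRingHom ρm (E x) = EL (ρ x) := by
        intro x
        change (MvPolynomial.finSuccEquiv A m (nagT A m N x)).map (MvPolynomial.map π) = _
        rw [finSuccEquiv_map, nagT_map]
        rfl
      have hcomp : (mapRingHom ρm).comp E.toRingHom = EL.toRingHom.comp ρ := RingHom.ext hE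
      have hcomp' : ρ.comp E.symm.toRingHom = EL.symm.toRingHom.comp (mapRingHom ρm) := by
        refine RingHom.ext fun x => ?_
        have := hE (E.symm x)
        rw [E.apply_symm_apply] at this
        simp only [RingHom.comp_apply]
        change ρ (E.symm x) = EL.symm (mapRingHom ρm x)
        rw [this, EL.symm_apply_apply]
      have hlead' : (mapRingHom ρm (E (f (Sum.inl 0)))).leadingCoeff = MvPolynomial.C c := by
        rw [hE]; exact hlead
      have hf' := hf.map E.toRingHom EL.toRingHom hcomp
      suffices h : RowRel (mapRingHom ρm) (E ∘ f) (Pi.single (Sum.inl 0) 1) by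
        have h2 := h.map E.symm.toRingHom EL.symm.toRingHom hcomp'
        convert h2 using 1
        · funext i; exact (E.symm_apply_apply _).symm
        · funext i
          by_cases hi : i = Sum.inl 0
          · subst hi; simp
          · simp [hi]
      change UniRow _ (E ∘ f) at hf'
      exact lift_step ρm (MvPolynomial.map_surjective π hπ) ih _ hf' (MvPolynomial.C c) (MvPolynomial.C c⁻¹)
        (by rw [← MvPolynomial.C_mul, inv_mul_cancel₀ hc, MvPolynomial.C_1]) hlead'
    intro f hf
    by_cases h0 : ρ (f (Sum.inl 0)) = 0
    · obtain ⟨i, hi⟩ := hf.exists_ne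
      have hi0 : i ≠ Sum.inl 0 := by rintro rfl; exact hi h0
      have h1 := RowRel.elem ρ f (Pi.single i 1) (Pi.single (Sum.inl 0) 1) (by simp [hi0])
      refine h1.trans (core _ (hf.rel h1) ?_)
      simpa [h0] using hi
    · exact core f hf h0
end LiftMax


section LiftPID
variable {A : Type*} [CommRing A] {κ : Type*} [Fintype κ] [DecidableEq κ]

noncomputable def redHom (σ : Type*) (q : A) :
    MvPolynomial σ A →+* MvPolynomial σ (A ⧸ Ideal.span {q}) :=
  MvPolynomial.map (Ideal.Quotient.mk (Ideal.span {q}))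

theorem redHom_eq_zero {σ : Type*} (q : A) (x : MvPolynomial σ A) :
    redHom σ q x = 0 ↔ C q ∣ x := by
  rw [MvPolynomial.C_dvd_iff_map_hom_eq_zero (Ideal.Quotient.mk (Ideal.span {q})) q]
  · rfl
  · intro r
    rw [Ideal.Quotient.eq_zero_iff_mem, Ideal.mem_span_singleton]

theorem redHom_eq {σ : Type*} (q : A) (x y : MvPolynomial σ A) :
    redHom σ q x = redHom σ q y ↔ C q ∣ x - y := by
  rw [← redHom_eq_zero, map_sub, sub_eq_zero]

theorem redHom_one {σ : Type*} (q : A) (x : MvPolynomial σ A) :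
    redHom σ q x = 1 ↔ C q ∣ x - 1 := by
  rw [← redHom_eq, map_one]

theorem uniRow_mono {σ : Type*} {p q : A} (h : p ∣ q) {ι : Type*} [Fintype ι]
    {f : ι → MvPolynomial σ A} (hf : UniRow (redHom σ q) f) : UniRow (redHom σ p) f := by
  obtain ⟨g, hg⟩ := hf
  refine ⟨g, ?_⟩
  rw [redHom_one] at hg ⊢
  exact (map_dvd C h).trans hg

variable [IsDomain A] [IsPrincipalIdealRing A]

theorem lift_const {σ : Type*} (q : A) (hq : q ≠ 0) (β : Fin 2 ⊕ κ → A)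
    (hβ : UniRow (redHom σ q) (fun i => C (β i))) :
    RowRel (redHom σ q) (fun i => C (β i)) (Pi.single (Sum.inl 0) 1) := by
  have h01 : (Sum.inl 0 : Fin 2 ⊕ κ) ≠ Sum.inl 1 := by simp
  obtain ⟨g, hg⟩ := hβ
  rw [redHom_one] at hg
  have hg' : q ∣ ∑ i, β i * constantCoeff (g i) - 1 := by
    have := map_dvd (constantCoeff) hg
    simpa [dotProduct, map_sum] using this
  obtain ⟨c, hc⟩ := avoid_many q hq (Finset.univ.erase (Sum.inl 0 : Fin 2 ⊕ κ)) (β (Sum.inl 0)) β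
  have hco : IsCoprime q (β (Sum.inl 0) + ∑ j ∈ Finset.univ.erase (Sum.inl 0), c j * β j) := by
    refine isCoprime_of_prime_dvd (fun h => hq h.1) fun p hp hpq hpb => hp.not_dvd_one ?_
    obtain ⟨h1, h2⟩ := hc p hp hpq hpb
    have h3 : p ∣ ∑ i, β i * constantCoeff (g i) := by
      refine Finset.dvd_sum fun i _ => Dvd.dvd.mul_right ?_ _
      by_cases hi : i = Sum.inl 0
      · subst hi; exact h1
      · exact h2 i (by simp [hi])
    exact (dvd_sub_right h3).1 (hpq.trans hg')
  let u : Fin 2 ⊕ κ → MvPolynomial σ A := fun j => if j = Sum.inl 0 then 0 else C (c j)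
  have h1 := RowRel.elem (redHom σ q) (fun i => C (β i)) u (Pi.single (Sum.inl 0) 1) (by simp [u])
  obtain ⟨x, y, hxy⟩ := hco
  refine h1.trans (RowRel.of_unit h01 (Sum.inl 0) (C y) ?_)
  rw [redHom_one]
  have e : (fun i => C (β i)) ⬝ᵥ u = C (∑ j ∈ Finset.univ.erase (Sum.inl 0), c j * β j) := by
    rw [dotProduct, ← Finset.sum_erase (s := Finset.univ) (a := (Sum.inl 0 : Fin 2 ⊕ κ)) (by simp [u]), map_sum]
    refine Finset.sum_congr rfl fun j hj => ?_
    have hj' : j ≠ Sum.inl 0 := Finset.ne_of_mem_erase hj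
    simp [u, hj', mul_comm]
  simp only [Pi.add_apply, Pi.smul_apply, Pi.single_eq_same, smul_eq_mul, mul_one, e]
  refine ⟨- C x, ?_⟩
  rw [← C_1, ← hxy]
  simp only [C_add, C_mul]
  ring

theorem lift_pid (m : ℕ) (q : A) (hq : q ≠ 0) :
    RowLift (redHom (Fin m) q) (Fin 2 ⊕ κ) (Sum.inl 0) := by
  have h01 : (Sum.inl 0 : Fin 2 ⊕ κ) ≠ Sum.inl 1 := by simp
  induction q using UniqueFactorizationMonoid.induction_on_prime with
  | h₁ => exact absurd rfl hq
  | h₂ x hx =>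
    intro f _
    exact RowRel.of_eq fun j => (redHom_eq _ _ _).2 ((hx.map C).dvd)
  | h₃ q p hq0 hp ih =>
    intro f hf
    obtain ⟨R1, hR1, h1⟩ := ih hq0 f (uniRow_mono (dvd_mul_left q p) hf)
    have hff1 : RowRel (redHom (Fin m) (p * q)) f (f ᵥ* R1) := ⟨R1, hR1, fun _ => rfl⟩
    refine hff1.trans ?_
    replace hf := hf.rel hff1
    generalize f ᵥ* R1 = f1 at hf h1
    clear hff1
    by_cases hpq : p ∣ q
    · have h0 := (redHom_eq _ _ _).1 (h1 (Sum.inl 0))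
      rw [Pi.single_eq_same] at h0
      obtain ⟨b, hb⟩ := h0
      refine RowRel.of_unit h01 (Sum.inl 0) (1 - C q * b) ?_
      rw [redHom_one]
      obtain ⟨r, rfl⟩ := hpq
      refine ⟨- C r * b * b, ?_⟩
      have : f1 (Sum.inl 0) = 1 + C (p * r) * b := by linear_combination hb
      rw [this]
      simp only [C_mul]; ring
    · have hco : IsCoprime p q := (hp.irreducible.coprime_iff_not_dvd).2 hpq
      obtain ⟨x, y, hxy⟩ := hco
      have hmax : (Ideal.span {p}).IsMaximal := 
        PrincipalIdealRing.isMaximal_of_irreducible hp.irreducible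
      let _ := Ideal.Quotient.field (Ideal.span {p})
      obtain ⟨R, hR, h2⟩ := lift_max (κ := κ) (Ideal.Quotient.mk (Ideal.span {p}))
        Ideal.Quotient.mk_surjective m f1 (uniRow_mono (dvd_mul_right p q) hf)
      change ∀ j, redHom (Fin m) p _ = redHom (Fin m) p _ at h2
      let θ : MvPolynomial (Fin m) A →ₐ[A] MvPolynomial (Fin m) A :=
        MvPolynomial.aeval fun i => C (y * q) * X i
      have θp : (redHom (Fin m) p).comp θ.toRingHom = redHom (Fin m) p := by
        apply MvPolynomial.ringHom_ext
        · intro a; simp [θ]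
        · intro i
          change redHom (Fin m) p (θ (X i)) = _
          rw [redHom_eq]
          refine ⟨- C x * X i, ?_⟩
          have : (C p * C x + C y * C q : MvPolynomial (Fin m) A) = 1 := by
            rw [← C_mul, ← C_mul, ← C_add, ← C_1, ← hxy]; ring_nf
          simp only [θ, aeval_X, C_mul]
          linear_combination X i * this
      have θq : (redHom (Fin m) q).comp θ.toRingHom
          = (redHom (Fin m) q).comp (C.comp constantCoeff) := by
        apply MvPolynomial.ringHom_ext
        · intro a; simp [θ]
        · intro i
          change redHom (Fin m) q (θ (X i)) = _
          simp only [RingHom.comp_apply, constantCoeff_X, map_zero]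
          rw [redHom_eq_zero]
          exact ⟨C y * X i, by simp only [θ, aeval_X, C_mul]; ring⟩
      have hR' : IsUnit (R.map θ).det := by
        have : (R.map θ).det = θ R.det := by rw [AlgHom.map_det]; rfl
        rw [this]; exact hR.map θ
      let β : Fin 2 ⊕ κ → A := fun j => y * q * (Pi.single (Sum.inl 0) 1 : Fin 2 ⊕ κ → A) j
        + x * p * constantCoeff (R (Sum.inl 0) j)
      have hrel : RowRel (redHom (Fin m) (p * q)) f1 (fun i => C (β i)) := by
        refine ⟨R.map θ, hR', fun j => ?_⟩
        rw [redHom_eq]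
        have hdp : C p ∣ (f1 ᵥ* R.map θ) j - C (β j) := by
          rw [← redHom_eq]
          have e1 : redHom (Fin m) p ((f1 ᵥ* R.map θ) j) = redHom (Fin m) p ((f1 ᵥ* R) j) := by
            simp only [vecMul, dotProduct, map_sum, map_mul, Matrix.map_apply]
            refine Finset.sum_congr rfl fun i _ => ?_
            have := RingHom.congr_fun θp (R i j)
            congr 1
          rw [e1, h2, redHom_eq]
          have : (Pi.single (Sum.inl 0) 1 : Fin 2 ⊕ κ → MvPolynomial (Fin m) A) j
            = C ((Pi.single (Sum.inl 0) 1 : Fin 2 ⊕ κ → A) j) := by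
            by_cases hj : j = Sum.inl 0
            · subst hj; simp
            · simp [hj]
          rw [this, ← C_sub]
          refine map_dvd C ⟨x * (Pi.single (Sum.inl 0) 1 : Fin 2 ⊕ κ → A) j
            - x * constantCoeff (R (Sum.inl 0) j), ?_⟩
          simp only [β]
          linear_combination -(Pi.single (Sum.inl 0) 1 : Fin 2 ⊕ κ → A) j * hxy
        have hdq : C q ∣ (f1 ᵥ* R.map θ) j - C (β j) := by
          rw [← redHom_eq]
          have e1 : redHom (Fin m) q ((f1 ᵥ* R.map θ) j)
              = redHom (Fin m) q (C (constantCoeff (R (Sum.inl 0) j))) := by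
            have : ∀ i, redHom (Fin m) q (θ (R i j))
                = redHom (Fin m) q (C (constantCoeff (R i j))) :=
              fun i => RingHom.congr_fun θq (R i j)
            simp only [vecMul, dotProduct, map_sum, map_mul, Matrix.map_apply, this, h1]
            rw [Finset.sum_eq_single (Sum.inl 0)]
            · simp
            · intro i _ hi; simp [hi]
            · simp
          rw [e1, redHom_eq, ← C_sub]
          refine map_dvd C ⟨y * constantCoeff (R (Sum.inl 0) j) -
            y * (Pi.single (Sum.inl 0) 1 : Fin 2 ⊕ κ → A) j, ?_⟩
          simp only [β]
          linear_combination -constantCoeff (R (Sum.inl 0) j) * hxy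
        rw [C_mul]
        refine IsCoprime.mul_dvd ?_ hdp hdq
        exact IsCoprime.map ⟨x, y, hxy⟩ C
      exact hrel.trans (lift_const _ (mul_ne_zero hp.ne_zero hq0) β (hf.rel hrel))
end LiftPID

section LiftLast

def LiftAt {S : Type*} [CommRing S] (q : S) : Prop :=
  ∀ (k : ℕ) (f : Fin (k + 2) → S), (∃ g : Fin (k + 2) → S, q ∣ f ⬝ᵥ g - 1) →
    ∃ M : Matrix (Fin (k + 2)) (Fin (k + 2)) S, IsUnit M.det ∧
      ∀ j, q ∣ (f ᵥ* M) j - (Pi.single 0 1 : Fin (k + 2) → S) j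

theorem liftAt_of {S S' T : Type*} [CommRing S] [CommRing S'] [CommRing T] (e : S ≃+* S')
    (ρ : S' →+* T) (q : S) (hρ : ∀ x, ρ x = 0 ↔ e q ∣ x)
    (H : ∀ k : ℕ, RowLift ρ (Fin 2 ⊕ Fin k) (Sum.inl 0)) : LiftAt q := by
  intro k f hf
  let ε : Fin 2 ⊕ Fin k ≃ Fin (k + 2) := finSumFinEquiv.trans (finCongr (by omega))
  have ε0 : ε (Sum.inl 0) = 0 := rfl
  obtain ⟨g, hg⟩ := hf
  obtain ⟨R, hR, hh⟩ := H k (fun i => e (f (ε i))) ⟨fun i => e (g (ε i)), by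
    have h1 : ρ (e (f ⬝ᵥ g - 1)) = 0 := (hρ _).2 (map_dvd e hg)
    rw [map_sub, map_sub, map_one, map_one, sub_eq_zero] at h1
    rw [← h1]
    congr 1
    simp only [dotProduct, map_sum, map_mul]
    exact Equiv.sum_comp ε (fun i => e (f i) * e (g i))⟩
  refine ⟨((R.reindex ε ε).map e.symm), ?_, fun j => ?_⟩
  · have : ((R.reindex ε ε).map e.symm).det = e.symm R.det := by
      rw [← Matrix.det_reindex_self ε R]
      exact (RingHom.map_det (e.symm : S' →+* S) _).symm
    rw [this]; exact hR.map e.symm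
  · have h2 := hh (ε.symm j)
    rw [← sub_eq_zero, ← map_sub, hρ] at h2
    have h3 := map_dvd e.symm h2
    rw [e.symm_apply_apply, map_sub] at h3
    convert h3 using 2
    · simp only [vecMul, dotProduct, map_sum, map_mul, Matrix.map_apply, Matrix.reindex_apply,
        Matrix.submatrix_apply, e.symm_apply_apply]
      exact (Equiv.sum_comp ε.symm (fun i => f (ε i) * e.symm (R i (ε.symm j)))).symm.trans (by simp) |>.symm
    · by_cases hj : j = 0
      · subst hj
        have : ε.symm 0 = Sum.inl 0 := by rw [← ε0, ε.symm_apply_apply]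
        simp [this]
      · have : ε.symm j ≠ Sum.inl 0 := by
          intro h; apply hj; rw [← ε0, ← h, ε.apply_symm_apply]
        simp [hj, this]

theorem liftAt_last {K : Type*} [Field K] (n : ℕ) (last : Fin n) (hlast : (last : ℕ) + 1 = n)
    (q : MvPolynomial (Fin n) K) (hq : q ∈ supported K {last}) : LiftAt q := by
  by_cases hq0 : q = 0
  · subst hq0
    refine liftAt_of (RingEquiv.refl _) (MvPolynomial.map (RingHom.id K)) 0 (fun x => ?_)
      (fun k => lift_max _ Function.surjective_id n)
    rw [MvPolynomial.map_id]; simp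
  obtain ⟨m, rfl⟩ : ∃ m, n = m + 1 := ⟨last, hlast.symm⟩
  have hl : last = Fin.last m := by ext; simp; omega
  subst hl
  let e : MvPolynomial (Fin (m + 1)) K ≃ₐ[K] MvPolynomial (Fin m) (Polynomial K) :=
    (renameEquiv K (finSuccEquivLast (n := m))).trans (optionEquivRight K (Fin m))
  have eX : e (X (Fin.last m)) = C Polynomial.X := by
    simp [e]
  rw [supported_eq_adjoin_X, Set.image_singleton, Algebra.adjoin_singleton_eq_range_aeval] at hq
  obtain ⟨q0, rfl⟩ := hq
  have he : e (Polynomial.aeval (X (Fin.last m)) q0) = C q0 := by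
    rw [← Polynomial.aeval_algHom_apply, eX]
    have : (Polynomial.aeval (C Polynomial.X : MvPolynomial (Fin m) (Polynomial K)))
        = IsScalarTower.toAlgHom K (Polynomial K) (MvPolynomial (Fin m) (Polynomial K)) := by
      ext; simp
    rw [this]; rfl
  have hq00 : q0 ≠ 0 := by rintro rfl; exact hq0 (by simp)
  refine liftAt_of e.toRingEquiv (redHom (Fin m) q0) _ (fun x => ?_) (fun k => lift_pid m q0 hq00)
  rw [redHom_eq_zero, ← he]; rfl
end LiftLast


section Tri
variable {S : Type*} [CommRing S]

/-- `1 ⊕ R`. -/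
def oneBlock {t : ℕ} (R : Matrix (Fin t) (Fin t) S) : Matrix (Fin (t + 1)) (Fin (t + 1)) S :=
  Matrix.of (Fin.cons (Fin.cons 1 0) (fun i => Fin.cons 0 (R i)))

theorem oneBlock_det {t : ℕ} (R : Matrix (Fin t) (Fin t) S) : (oneBlock R).det = R.det := by
  rw [Matrix.det_succ_column_zero, Fin.sum_univ_succ]
  simp only [oneBlock, Matrix.of_apply, Fin.cons_zero, Fin.cons_succ, mul_zero, zero_mul,
    Finset.sum_const_zero, add_zero, Fin.val_zero, pow_zero, one_mul, mul_one, Fin.succAbove_zero]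
  congr 1

theorem triang (t : ℕ) : ∀ (q : Fin t → S) (_ : ∀ i j, i ≤ j → q j ∣ q i)
    (_ : ∀ i, LiftAt (q i)) (W : Matrix (Fin t) (Fin t) S)
    (_ : ∀ k, ∃ X : Matrix (Fin t) (Fin t) S, ∀ i j, i ≤ k → j ≤ k →
      q k ∣ (W * X) i j - (1 : Matrix (Fin t) (Fin t) S) i j) (v : Fin t → S),
    ∃ (R : Matrix (Fin t) (Fin t) S) (c : Fin t → S), IsUnit R.det ∧
      (∀ i j, i < j → q i ∣ (W * R) i j) ∧ (∀ i, ∃ u, q i ∣ (W * R) i i * u - 1) ∧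
      ∀ i, q i ∣ (W *ᵥ c) i + v i := by
  induction t with
  | zero =>
    intro q _ _ W _ v
    exact ⟨1, 0, by simp, fun i => i.elim0, fun i => i.elim0, fun i => i.elim0⟩
  | succ t ih =>
    intro q hq hL W hX v
    obtain ⟨R1, hR1, h1, u, hu⟩ : ∃ R1 : Matrix (Fin (t + 1)) (Fin (t + 1)) S, IsUnit R1.det ∧
        (∀ j, j ≠ 0 → q 0 ∣ (W * R1) 0 j) ∧ ∃ u, q 0 ∣ (W * R1) 0 0 * u - 1 := by
      obtain ⟨X, hX0⟩ := hX 0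
      have hX00 := hX0 0 0 le_rfl le_rfl
      rw [Matrix.one_apply_eq] at hX00
      rcases t with _ | t
      · refine ⟨1, by simp, fun j hj => absurd (Fin.ext (by simp)) hj, X 0 0, ?_⟩
        simpa [Matrix.mul_apply] using hX00
      · obtain ⟨M, hM, h⟩ := hL 0 t (W 0) ⟨fun a => X a 0, by simpa [Matrix.mul_apply, dotProduct] using hX00⟩
        have e : ∀ j, (W * M) 0 j = (W 0 ᵥ* M) j := fun j => rfl
        refine ⟨M, hM, fun j hj => ?_, 1, ?_⟩
        · have := h j
          rw [e]
          simpa [hj] using this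
        · have := h 0
          rw [e, mul_one]
          simpa using this
    set W1 := W * R1 with hW1
    have hX1 : ∀ k, ∃ X : Matrix (Fin (t + 1)) (Fin (t + 1)) S, ∀ i j, i ≤ k → j ≤ k →
      q k ∣ (W1 * X) i j - (1 : Matrix (Fin (t + 1)) (Fin (t + 1)) S) i j := by
      intro k
      obtain ⟨X, h⟩ := hX k
      refine ⟨R1⁻¹ * X, fun i j hi hj => ?_⟩
      rw [hW1, ← Matrix.mul_assoc, Matrix.mul_assoc W, Matrix.mul_nonsing_inv _ hR1, Matrix.mul_one]
      exact h i j hi hj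
    let W' : Matrix (Fin t) (Fin t) S := W1.submatrix Fin.succ Fin.succ
    have hX' : ∀ k, ∃ X : Matrix (Fin t) (Fin t) S, ∀ i j, i ≤ k → j ≤ k →
      q k.succ ∣ (W' * X) i j - (1 : Matrix (Fin t) (Fin t) S) i j := by
      intro k
      obtain ⟨X, h⟩ := hX1 k.succ
      refine ⟨X.submatrix Fin.succ Fin.succ, fun i j hi hj => ?_⟩
      have hk0 : q k.succ ∣ q 0 := hq _ _ (Fin.zero_le _)
      have hx : q k.succ ∣ X 0 j.succ := by
        have h0 := h 0 j.succ (Fin.zero_le _) (Fin.succ_le_succ_iff.2 hj)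
        rw [Matrix.mul_apply, Fin.sum_univ_succ, Matrix.one_apply_ne (Fin.succ_ne_zero j).symm,
          sub_zero] at h0
        have hs : q k.succ ∣ ∑ a : Fin t, W1 0 a.succ * X a.succ j.succ :=
          Finset.dvd_sum fun a _ => (hk0.trans (h1 _ (Fin.succ_ne_zero a))).mul_right _
        have h2 : q k.succ ∣ W1 0 0 * X 0 j.succ := (dvd_add_left hs).1 h0
        have h3 : X 0 j.succ = u * (W1 0 0 * X 0 j.succ) - (W1 0 0 * u - 1) * X 0 j.succ := by ring
        rw [h3]
        exact dvd_sub (h2.mul_left u) ((hk0.trans hu).mul_right _)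
      have h4 := h i.succ j.succ (Fin.succ_le_succ_iff.2 hi) (Fin.succ_le_succ_iff.2 hj)
      rw [Matrix.mul_apply, Fin.sum_univ_succ] at h4
      have e1 : (1 : Matrix (Fin (t + 1)) (Fin (t + 1)) S) i.succ j.succ
          = (1 : Matrix (Fin t) (Fin t) S) i j := by
        simp [Matrix.one_apply]
      rw [e1, add_sub_assoc] at h4
      exact (dvd_add_right (hx.mul_left _)).1 h4
    obtain ⟨R', c', hR', h2, h3, h4⟩ := ih (fun i => q i.succ)
      (fun i j hij => hq _ _ (Fin.succ_le_succ_iff.2 hij)) (fun i => hL _) W' hX'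
      (fun i => W1 i.succ 0 * (-u * v 0) + v i.succ)
    have ess : ∀ i j : Fin t, (W * (R1 * oneBlock R')) i.succ j.succ = (W' * R') i j := by
      intro i j
      rw [← Matrix.mul_assoc, ← hW1, Matrix.mul_apply, Fin.sum_univ_succ]
      simp [oneBlock, W', Matrix.mul_apply]
    have e00 : (W * (R1 * oneBlock R')) 0 0 = W1 0 0 := by
      rw [← Matrix.mul_assoc, ← hW1, Matrix.mul_apply, Fin.sum_univ_succ]
      simp [oneBlock]
    have e0s : ∀ j : Fin t, (W * (R1 * oneBlock R')) 0 j.succ = ∑ a : Fin t, W1 0 a.succ * R' a j := by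
      intro j
      rw [← Matrix.mul_assoc, ← hW1, Matrix.mul_apply, Fin.sum_univ_succ]
      simp [oneBlock]
    refine ⟨R1 * oneBlock R', R1 *ᵥ (Fin.cons (-u * v 0) c'), ?_, ?_, ?_, ?_⟩
    · rw [det_mul, oneBlock_det]; exact hR1.mul hR'
    · intro i j hij
      cases j using Fin.cases with
      | zero => exact absurd hij (Fin.not_lt_zero i)
      | succ j =>
        cases i using Fin.cases with
        | zero =>
          rw [e0s]
          exact Finset.dvd_sum fun a _ => (h1 _ (Fin.succ_ne_zero a)).mul_right _
        | succ i =>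
          rw [ess]
          exact h2 i j (Fin.succ_lt_succ_iff.1 hij)
    · intro i
      cases i using Fin.cases with
      | zero => rw [e00]; exact ⟨u, hu⟩
      | succ i => rw [ess]; exact h3 i
    · intro i
      rw [Matrix.mulVec_mulVec, ← hW1, mulVec, dotProduct, Fin.sum_univ_succ]
      simp only [Fin.cons_zero, Fin.cons_succ]
      cases i using Fin.cases with
      | zero =>
        have hs : q 0 ∣ ∑ a : Fin t, W1 0 a.succ * c' a :=
          Finset.dvd_sum fun a _ => (h1 _ (Fin.succ_ne_zero a)).mul_right _
        have e : W1 0 0 * (-u * v 0) + ∑ a : Fin t, W1 0 a.succ * c' a + v 0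
          = -((W1 0 0 * u - 1) * v 0) + ∑ a : Fin t, W1 0 a.succ * c' a := by ring
        rw [e]
        exact dvd_add ((hu.mul_right _).neg_right) hs
      | succ i =>
        have := h4 i
        have e : W1 i.succ 0 * (-u * v 0) + ∑ a : Fin t, W1 i.succ a.succ * c' a + v i.succ
          = (W' *ᵥ c') i + (W1 i.succ 0 * (-u * v 0) + v i.succ) := by
          simp only [mulVec, dotProduct, W', Matrix.submatrix_apply]; ring
        rw [e]; exact this
end Tri


section RI
variable {S : Type*} [CommRing S]

theorem prod_lt_succ {t : ℕ} (h : Fin (t + 1) → S) (k : Fin (t + 1)) :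
    ∏ j ∈ Finset.univ.filter (fun j : Fin (t + 1) => (j : ℕ) < (k : ℕ) + 1), h j
      = (∏ j ∈ Finset.univ.filter (fun j : Fin (t + 1) => (j : ℕ) < (k : ℕ)), h j) * h k := by
  have : Finset.univ.filter (fun j : Fin (t + 1) => (j : ℕ) < (k : ℕ) + 1)
      = insert k (Finset.univ.filter (fun j : Fin (t + 1) => (j : ℕ) < (k : ℕ))) := by
    ext j; simp [Fin.ext_iff]; omega
  rw [this, Finset.prod_insert (by simp), mul_comm]

theorem prod_dvd_prod_card {t : ℕ} (h : Fin (t + 1) → S) (hc : ∀ i j, i ≤ j → h i ∣ h j)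
    (s : Finset (Fin (t + 1))) :
    ∏ j ∈ Finset.univ.filter (fun j : Fin (t + 1) => (j : ℕ) < s.card), h j ∣ ∏ x ∈ s, h x := by
  induction s using Finset.induction_on_max with
  | empty => simp
  | insert a s hs ih =>
    have ha : a ∉ s := fun h => lt_irrefl _ (hs a h)
    have hcard : s.card ≤ (a : ℕ) := by
      rw [← Fin.card_Iio a]
      exact Finset.card_le_card fun x hx => Finset.mem_Iio.2 (hs x hx)
    rw [Finset.card_insert_of_notMem ha, Finset.prod_insert ha]
    have h2 := prod_lt_succ h ⟨s.card, by omega⟩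
    simp only at h2
    rw [h2, mul_comm]
    exact mul_dvd_mul (hc _ _ (Fin.le_def.2 hcard)) ih

/-- right invertibility of the first rows modulo `e` -/
def RInv {t : ℕ} (W : Matrix (Fin t) (Fin t) S) (k : Fin t) (e : S) : Prop :=
  ∃ X : Matrix (Fin t) (Fin t) S, ∀ i j, i ≤ k → j ≤ k →
      e ∣ (W * X) i j - (1 : Matrix (Fin t) (Fin t) S) i j

theorem RInv.mono {t : ℕ} {W : Matrix (Fin t) (Fin t) S} {k k' : Fin t} (hk : k ≤ k') {e : S}
    (h : RInv W k' e) : RInv W k e := by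
  obtain ⟨X, h⟩ := h
  exact ⟨X, fun i j hi hj => h i j (hi.trans hk) (hj.trans hk)⟩

theorem RInv.iff {t : ℕ} {W : Matrix (Fin t) (Fin t) S} {k : Fin t} {e : S} :
    RInv W k e ↔ ∃ (X : Matrix (Fin t) {i // i ≤ k} S) (Y : Matrix {i // i ≤ k} {i // i ≤ k} S),
      W.submatrix (Subtype.val : {i // i ≤ k} → Fin t) id * X = 1 + e • Y := by
  constructor
  · rintro ⟨X, h⟩
    choose! Y hY using h
    refine ⟨X.submatrix id Subtype.val, Matrix.of fun i j => Y i j, ?_⟩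
    ext i j
    have := hY i j i.2 j.2
    have e1 : (1 : Matrix (Fin t) (Fin t) S) i j = (1 : Matrix {i // i ≤ k} {i // i ≤ k} S) i j := by
      simp [Matrix.one_apply, Subtype.ext_iff]
    rw [e1] at this
    rw [Matrix.add_apply, Matrix.smul_apply, smul_eq_mul, Matrix.of_apply, ← this]
    simp [Matrix.mul_apply]
  · rintro ⟨X, Y, h⟩
    refine ⟨Matrix.of fun a j => if hj : j ≤ k then X a ⟨j, hj⟩ else 0, fun i j hi hj => ⟨Y ⟨i, hi⟩ ⟨j, hj⟩, ?_⟩⟩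
    have := congrFun (congrFun h ⟨i, hi⟩) ⟨j, hj⟩
    rw [Matrix.add_apply, Matrix.smul_apply, smul_eq_mul] at this
    have e1 : (1 : Matrix (Fin t) (Fin t) S) i j
        = (1 : Matrix {i // i ≤ k} {i // i ≤ k} S) ⟨i, hi⟩ ⟨j, hj⟩ := by
      simp [Matrix.one_apply]
    rw [e1, sub_eq_iff_eq_add', ← this]
    simp [Matrix.mul_apply, hj]

theorem RInv.mul {t : ℕ} {W : Matrix (Fin t) (Fin t) S} {k : Fin t} {e e' : S}
    (h : RInv W k e) (h' : RInv W k e') : RInv W k (e * e') := by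
  rw [RInv.iff] at h h' ⊢
  obtain ⟨X, Y, h⟩ := h
  obtain ⟨X', Y', h'⟩ := h'
  generalize W.submatrix (Subtype.val : {i // i ≤ k} → Fin t) id = N at *
  refine ⟨X + X' - X * (N * X'), - (Y * Y'), ?_⟩
  rw [Matrix.mul_sub, Matrix.mul_add, ← Matrix.mul_assoc, h, h']
  rw [smul_neg, mul_smul, Matrix.mul_add, Matrix.add_mul (1 : Matrix _ _ S) (e • Y) (e' • Y'),
    Matrix.mul_one, Matrix.one_mul, Matrix.smul_mul, Matrix.mul_smul]
  abel

theorem RInv.one {t : ℕ} (W : Matrix (Fin t) (Fin t) S) (k : Fin t) : RInv W k 1 :=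
  ⟨0, fun _ _ _ _ => one_dvd _⟩

theorem RInv.prod {t : ℕ} {W : Matrix (Fin t) (Fin t) S} {k : Fin t} (e : Fin t → S)
    (s : Finset (Fin t)) (h : ∀ j ∈ s, RInv W k (e j)) : RInv W k (∏ j ∈ s, e j) := by
  induction s using Finset.induction_on with
  | empty => exact RInv.one W k
  | insert a s ha ih =>
    rw [Finset.prod_insert ha]
    exact (h a (by simp)).mul (ih fun j hj => h j (by simp [hj]))

theorem rinv_step [IsDomain S] {t : ℕ} (h : Fin (t + 1) → S) (hc : ∀ i j, i ≤ j → h i ∣ h j)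
    (V : Matrix (Fin (t + 1)) (Fin (t + 1)) S) (z : S) (φ : S →+* S) (φh : ∀ i, φ (h i) = h i)
    (φV : ∀ i j, φ (V i j) = V i j) (φz : φ z = 0) (j : Fin t) (hj : h j.castSucc ≠ 0) (e : S)
    (he : h j.succ = h j.castSucc * e)
    (hred : reducedIdeal (Matrix.diagonal h * V * Matrix.diagonal
        (fun i : Fin (t + 1) => if i = Fin.last t then z else 1)) ((j : ℕ) + 1)
      (∏ i ∈ Finset.univ.filter (fun i : Fin (t + 1) => (i : ℕ) < (j : ℕ) + 1), h i) = ⊤) :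
    RInv (V.submatrix Fin.castSucc Fin.castSucc) j e := by
  set W := V.submatrix Fin.castSucc Fin.castSucc with hW
  set d := ∏ i ∈ Finset.univ.filter (fun i : Fin (t + 1) => (i : ℕ) < (j : ℕ) + 1), h i with hd
  have hdP : d = (∏ i ∈ Finset.univ.filter (fun i : Fin (t + 1) => (i : ℕ) < (j : ℕ)), h i)
      * h j.castSucc := prod_lt_succ h j.castSucc
  have hd0 : d ≠ 0 := by
    rw [hd, Finset.prod_ne_zero_iff]
    intro i hi h0
    apply hj
    have hi' : (i : ℕ) < j + 1 := (Finset.mem_filter.1 hi).2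
    have := hc i j.castSucc (by rw [Fin.le_def]; simp; omega)
    rwa [h0, zero_dvd_iff] at this
  have φd : φ d = d := by rw [hd, map_prod]; simp [φh]
  let I : Ideal S :=
    { carrier := {s | ∃ X : Matrix (Fin t) (Fin t) S, ∀ i i', i ≤ j → i' ≤ j →
        e ∣ (W * X) i i' - s * (1 : Matrix (Fin t) (Fin t) S) i i'}
      zero_mem' := ⟨0, fun i i' _ _ => by simp⟩
      add_mem' := by
        rintro a b ⟨X, hX⟩ ⟨Y, hY⟩
        refine ⟨X + Y, fun i i' hi hi' => ?_⟩
        have := dvd_add (hX i i' hi hi') (hY i i' hi hi')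
        rw [Matrix.mul_add, Matrix.add_apply]
        convert this using 1; ring
      smul_mem' := by
        rintro a b ⟨X, hX⟩
        refine ⟨a • X, fun i i' hi hi' => ?_⟩
        have := (hX i i' hi hi').mul_left a
        rw [Matrix.mul_smul, Matrix.smul_apply, smul_eq_mul, smul_eq_mul]
        convert this using 1; ring }
  have hle : reducedIdeal (Matrix.diagonal h * V * Matrix.diagonal
        (fun i : Fin (t + 1) => if i = Fin.last t then z else 1)) ((j : ℕ) + 1) d ≤ I.comap φ := by
    refine Ideal.span_le.2 ?_
    rintro v ⟨r, c, hrc⟩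
    change φ v ∈ I
    have key : d * φ v = (∏ a, h (r a)) * (V.submatrix r c).det
        * ∏ b, (if c b = Fin.last t then (0 : S) else 1) := by
      have h1 := congrArg φ hrc
      rw [map_mul, φd] at h1
      rw [h1, ← Matrix.det_diagonal, ← Matrix.det_diagonal, ← Matrix.det_mul, ← Matrix.det_mul,
        RingHom.map_det]
      congr 1
      ext a b
      simp only [RingHom.mapMatrix_apply, Matrix.map_apply, Matrix.submatrix_apply,
        Matrix.mul_diagonal, Matrix.diagonal_mul, map_mul, φh, φV]
      split_ifs <;> simp [φz]
    by_cases hcl : ∃ b, c b = Fin.last t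
    · obtain ⟨b, hb⟩ := hcl
      have : ∏ b, (if c b = Fin.last t then (0 : S) else 1) = 0 :=
        Finset.prod_eq_zero (Finset.mem_univ b) (if_pos hb)
      rw [this, mul_zero, mul_eq_zero] at key
      rw [key.resolve_left hd0]
      exact I.zero_mem
    push Not at hcl
    have hE : ∏ b, (if c b = Fin.last t then (0 : S) else 1) = 1 :=
      Finset.prod_eq_one fun b _ => if_neg (hcl b)
    rw [hE, mul_one] at key
    by_cases hr : ∀ a, (r a : ℕ) < (j : ℕ) + 1
    · let r' : Fin (j + 1) → Fin (j + 1) := fun a => ⟨r a, hr a⟩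
      have hr' : Function.Injective r' := by
        intro a b hab
        apply r.injective
        ext
        exact (congrArg Fin.val hab : (r' a).val = (r' b).val)
      have hrs := Finite.injective_iff_surjective.1 hr'
      have hdr : ∏ a, h (r a) = d := by
        rw [hd, ← Finset.prod_map Finset.univ r h]
        congr 1
        refine (Finset.eq_of_subset_of_card_le ?_ ?_)
        · intro x hx
          obtain ⟨a, -, rfl⟩ := Finset.mem_map.1 hx
          simpa using hr a
        · rw [Finset.card_map, Finset.card_univ, Fintype.card_fin]
          have := Fin.card_filter_val_lt (n := t + 1) (m := (j : ℕ) + 1)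
          rw [this]; omega
      rw [hdr] at key
      have key' := mul_left_cancel₀ hd0 key
      choose c' hc' using fun b => Fin.exists_castSucc_eq.2 (hcl b)
      choose g hg using fun i : Fin (j + 1) => hrs i
      let g' : Fin t → Fin (j + 1) := fun i => if hi : (i : ℕ) < j + 1 then g ⟨i, hi⟩ else 0
      have hg' : ∀ i : Fin t, i ≤ j → r (g' i) = i.castSucc := by
        intro i hi
        have hi' : (i : ℕ) < j + 1 := by have := Fin.le_def.1 hi; omega
        ext
        have := congrArg Fin.val (hg ⟨i, hi'⟩)
        simpa [g', hi', hi, r'] using this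
      refine ⟨Matrix.of fun a i' => ∑ b, if c' b = a then (V.submatrix r c).adjugate b (g' i') else 0,
        fun i i' hi hi' => ?_⟩
      have e1 : (W * (Matrix.of fun a i' => ∑ b, if c' b = a then (V.submatrix r c).adjugate b (g' i') else 0 :
          Matrix (Fin t) (Fin t) S)) i i'
          = ((V.submatrix r c) * (V.submatrix r c).adjugate) (g' i) (g' i') := by
        rw [Matrix.mul_apply, Matrix.mul_apply]
        simp only [Matrix.of_apply, Finset.mul_sum]
        rw [Finset.sum_comm]
        refine Finset.sum_congr rfl fun b _ => ?_
        simp [hW, hg' i hi, hc']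
      rw [e1, Matrix.mul_adjugate, key', Matrix.smul_apply, smul_eq_mul]
      have e2 : (1 : Matrix (Fin (j + 1)) (Fin (j + 1)) S) (g' i) (g' i')
          = (1 : Matrix (Fin t) (Fin t) S) i i' := by
        have : g' i = g' i' ↔ i = i' := by
          constructor
          · intro hh
            have := congrArg r hh
            rw [hg' i hi, hg' i' hi'] at this
            exact Fin.castSucc_injective _ this
          · rintro rfl; rfl
        simp [Matrix.one_apply, this]
      rw [e2, sub_self]
      exact dvd_zero _
    · push Not at hr
      obtain ⟨a0, ha0⟩ := hr
      have hev : e ∣ φ v := by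
        have h1 : ∏ a, h (r a) = h (r a0) * ∏ a ∈ Finset.univ.erase a0, h (r a) :=
          (Finset.mul_prod_erase _ _ (Finset.mem_univ a0)).symm
        have h2 : h j.succ ∣ h (r a0) := hc _ _ (by rw [Fin.le_def]; simpa using ha0)
        have h3 := prod_dvd_prod_card h hc ((Finset.univ.erase a0).map r)
        rw [Finset.card_map, Finset.card_erase_of_mem (Finset.mem_univ _), Finset.card_univ,
          Fintype.card_fin, Nat.add_sub_cancel, Finset.prod_map] at h3
        have h4 : d * e ∣ ∏ a, h (r a) := by
          have : d * e = h j.succ * ∏ i ∈ Finset.univ.filter (fun i : Fin (t + 1) => (i : ℕ) < (j : ℕ)), h i := by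
            rw [hdP, he]; ring
          rw [this, h1]
          exact mul_dvd_mul h2 h3
        have h5 : d * e ∣ d * φ v := by rw [key]; exact h4.mul_right _
        exact (mul_dvd_mul_iff_left hd0).1 h5
      refine ⟨0, fun i i' _ _ => ?_⟩
      rw [Matrix.mul_zero, Matrix.zero_apply, zero_sub]
      exact (hev.mul_right _).neg_right
  have h1 : (1 : S) ∈ I.comap φ := hle (by rw [hred]; trivial)
  rw [Ideal.mem_comap, map_one] at h1
  obtain ⟨X, hX⟩ := h1
  exact ⟨X, fun i i' hi hi' => by simpa using hX i i' hi hi'⟩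
end RI

section Assemble
variable {S : Type*} [CommRing S]

theorem assemble [IsDomain S] {t : ℕ} (h : Fin (t + 1) → S) (hc : ∀ i j, i ≤ j → h i ∣ h j)
    (q : Fin t → S) (hq : ∀ k, h k.castSucc * q k = h (Fin.last t))
    (Vt : Matrix (Fin (t + 1)) (Fin (t + 1)) S) (hdet : IsUnit Vt.det)
    (htri : ∀ (i : Fin t) (j : Fin (t + 1)), i.castSucc < j → q i ∣ Vt i.castSucc j)
    (hdiag : ∀ i : Fin t, ∃ u, q i ∣ Vt i.castSucc i.castSucc * u - 1) :
    ∃ P : Matrix (Fin (t + 1)) (Fin (t + 1)) S, IsUnit P.det ∧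
      Matrix.diagonal h * Vt = P * Matrix.diagonal h := by
  classical
  by_cases hl : h (Fin.last t) = 0
  · have hrow : ∀ i, h i ≠ 0 → IsUnit (Vt i i) ∧ ∀ j, i < j → Vt i j = 0 := by
      intro i hi
      have hil : i ≠ Fin.last t := by rintro rfl; exact hi hl
      obtain ⟨i', rfl⟩ := Fin.exists_castSucc_eq.2 hil
      have hq0 : q i' = 0 := by
        have := hq i'
        rw [hl, mul_eq_zero] at this
        exact this.resolve_left hi
      constructor
      · obtain ⟨u, hu⟩ := hdiag i'
        rw [hq0, zero_dvd_iff, sub_eq_zero] at hu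
        exact IsUnit.of_mul_eq_one _ hu
      · intro j hj
        have := htri i' j hj
        rwa [hq0, zero_dvd_iff] at this
    choose! x hx using hc
    let P : Matrix (Fin (t + 1)) (Fin (t + 1)) S := Matrix.of fun i j =>
      if h i = 0 then (if i = j then 1 else 0) else (if j ≤ i then x j i * Vt i j else 0)
    refine ⟨P, ?_, ?_⟩
    · rw [Matrix.det_of_isLowerTriangular]
      · rw [IsUnit.prod_univ_iff]
        intro i
        by_cases hi : h i = 0
        · simp [P, hi]
        · have h1 : x i i = 1 := by
            have := hx i i le_rfl
            exact mul_left_cancel₀ hi (by rw [← this, mul_one])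
          simp only [P, Matrix.of_apply, if_neg hi, le_refl, if_true, h1, one_mul]
          exact (hrow i hi).1
      · intro i j hij
        have hij' : i < j := hij
        simp [P, hij'.ne, hij'.not_ge]
    · ext i j
      rw [Matrix.diagonal_mul, Matrix.mul_diagonal]
      by_cases hi : h i = 0
      · by_cases hij : i = j
        · subst hij; simp [hi]
        · simp [P, hi, hij]
      · by_cases hji : j ≤ i
        · simp only [P, Matrix.of_apply, if_neg hi, if_pos hji]
          conv_lhs => rw [hx j i hji]
          ring
        · simp [P, hi, hji, (hrow i hi).2 j (not_le.1 hji)]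
  · have hne : ∀ i, h i ≠ 0 := by
      intro i hi
      have := hc i _ (Fin.le_last i)
      rw [hi, zero_dvd_iff] at this
      exact hl this
    have hdv : ∀ i j, h j ∣ h i * Vt i j := by
      intro i j
      by_cases hji : j ≤ i
      · exact (hc j i hji).mul_right _
      · rw [not_le] at hji
        have hil : i ≠ Fin.last t := fun h => absurd (hji.trans_le (Fin.le_last j)) (by simp [h])
        obtain ⟨i', rfl⟩ := Fin.exists_castSucc_eq.2 hil
        obtain ⟨y, hy⟩ := htri i' j hji
        rw [hy, ← mul_assoc, hq]
        exact (hc j _ (Fin.le_last j)).mul_right _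
    choose P hP using hdv
    have hE : Matrix.diagonal h * Vt = Matrix.of P * Matrix.diagonal h := by
      ext i j
      rw [Matrix.diagonal_mul, Matrix.mul_diagonal, hP, mul_comm]; rfl
    refine ⟨Matrix.of P, ?_, hE⟩
    have hd := congrArg Matrix.det hE
    rw [det_mul, det_mul, mul_comm, det_diagonal] at hd
    have := mul_right_cancel₀ (Finset.prod_ne_zero_iff.2 fun i _ => hne i) hd
    rw [← this]; exact hdet

/-- the block matrix `[[R, c], [0, 1]]`. -/
def snocBlock {t : ℕ} (R : Matrix (Fin t) (Fin t) S) (c : Fin t → S) :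
    Matrix (Fin (t + 1)) (Fin (t + 1)) S :=
  Matrix.of fun i j => Fin.lastCases (motive := fun _ => S)
    (Fin.lastCases (motive := fun _ => S) 1 (fun _ => 0) j)
    (fun i => Fin.lastCases (motive := fun _ => S) (c i) (fun j => R i j) j) i

@[simp] theorem snocBlock_cc {t : ℕ} (R : Matrix (Fin t) (Fin t) S) (c : Fin t → S) (i j : Fin t) :
    snocBlock R c i.castSucc j.castSucc = R i j := by simp [snocBlock]
@[simp] theorem snocBlock_cl {t : ℕ} (R : Matrix (Fin t) (Fin t) S) (c : Fin t → S) (i : Fin t) :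
    snocBlock R c i.castSucc (Fin.last t) = c i := by simp [snocBlock]
@[simp] theorem snocBlock_lc {t : ℕ} (R : Matrix (Fin t) (Fin t) S) (c : Fin t → S) (j : Fin t) :
    snocBlock R c (Fin.last t) j.castSucc = 0 := by simp [snocBlock]
@[simp] theorem snocBlock_ll {t : ℕ} (R : Matrix (Fin t) (Fin t) S) (c : Fin t → S) :
    snocBlock R c (Fin.last t) (Fin.last t) = 1 := by simp [snocBlock]

theorem snocBlock_det {t : ℕ} (R : Matrix (Fin t) (Fin t) S) (c : Fin t → S) :
    (snocBlock R c).det = R.det := by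
  rw [Matrix.det_succ_row _ (Fin.last t), Fin.sum_univ_castSucc]
  simp only [snocBlock_lc, snocBlock_ll, mul_zero, zero_mul, Finset.sum_const_zero, zero_add,
    mul_one, Fin.succAbove_last, Fin.val_last]
  rw [Even.neg_one_pow ⟨t, rfl⟩, one_mul]
  congr 1
  ext i j
  simp

theorem snocBlock_comm {t : ℕ} (R : Matrix (Fin t) (Fin t) S) (c : Fin t → S) (z : S) :
    snocBlock R c * Matrix.diagonal (fun i : Fin (t + 1) => if i = Fin.last t then z else 1)
      = Matrix.diagonal (fun i : Fin (t + 1) => if i = Fin.last t then z else 1)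
        * snocBlock R (z • c) := by
  ext i j
  rw [Matrix.mul_diagonal, Matrix.diagonal_mul]
  cases i using Fin.lastCases <;> cases j using Fin.lastCases <;>
    simp [mul_comm]

theorem master [IsDomain S] {t : ℕ} (h : Fin (t + 1) → S) (hc : ∀ i j, i ≤ j → h i ∣ h j)
    (V : Matrix (Fin (t + 1)) (Fin (t + 1)) S) (hV : IsUnit V.det) (z : S) (φ : S →+* S)
    (φh : ∀ i, φ (h i) = h i) (φV : ∀ i j, φ (V i j) = V i j) (φz : φ z = 0)
    (A : Subsemiring S) (hA : ∀ a ∈ A, LiftAt a)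
    (hdivA : ∀ i j, i ≤ j → ∃ e ∈ A, h j = h i * e)
    (hred : ∀ j : Fin t, reducedIdeal (Matrix.diagonal h * V * Matrix.diagonal
        (fun i : Fin (t + 1) => if i = Fin.last t then z else 1)) ((j : ℕ) + 1)
      (∏ i ∈ Finset.univ.filter (fun i : Fin (t + 1) => (i : ℕ) < (j : ℕ) + 1), h i) = ⊤) :
    MatEquiv (Matrix.diagonal h * V * Matrix.diagonal
        (fun i : Fin (t + 1) => if i = Fin.last t then z else 1))
      (Matrix.diagonal (fun i : Fin (t + 1) => if i = Fin.last t then z * h i else h i)) := by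
  have hex : ∀ j : Fin t, ∃ e ∈ A, h j.succ = h j.castSucc * e ∧
      RInv (V.submatrix Fin.castSucc Fin.castSucc) j e := by
    intro j
    by_cases hj : h j.castSucc = 0
    · refine ⟨1, A.one_mem, ?_, RInv.one _ _⟩
      have := hc j.castSucc j.succ j.castSucc_lt_succ.le
      rw [hj, zero_dvd_iff] at this
      rw [this, hj, zero_mul]
    · obtain ⟨e, heA, he⟩ := hdivA j.castSucc j.succ j.castSucc_lt_succ.le
      exact ⟨e, heA, he, rinv_step h hc V z φ φh φV φz j hj e he (hred j)⟩
  choose e heA he hR using hex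
  let q : Fin t → S := fun k => ∏ j ∈ Finset.univ.filter (fun j => k ≤ j), e j
  have hqA : ∀ k, q k ∈ A := fun k => by
    show (∏ j ∈ Finset.univ.filter (fun j : Fin t => k ≤ j), e j) ∈ A
    exact prod_mem (fun j _ => heA j)
  have hq : ∀ k, h k.castSucc * q k = h (Fin.last t) := by
    have gen : ∀ k : Fin (t + 1), h k * ∏ j ∈ Finset.univ.filter (fun j : Fin t => k ≤ j.castSucc), e j
        = h (Fin.last t) := by
      intro k
      induction k using Fin.reverseInduction with
      | last =>
        rw [Finset.filter_false_of_mem, Finset.prod_empty, mul_one]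
        intro j _ hj
        exact absurd (hj.trans_lt j.castSucc_lt_last) (lt_irrefl _)
      | cast i ih =>
        have : Finset.univ.filter (fun j : Fin t => i.castSucc ≤ j.castSucc)
            = insert i (Finset.univ.filter (fun j : Fin t => i.succ ≤ j.castSucc)) := by
          ext j
          simp only [Finset.mem_filter, Finset.mem_univ, true_and, Finset.mem_insert, Fin.ext_iff, Fin.le_def, Fin.val_castSucc, Fin.val_succ]
          omega
        rw [this, Finset.prod_insert (by simp), ← mul_assoc, ← he, ih]
    intro k
    simpa using gen k.castSucc
  have hqd : ∀ i j, i ≤ j → q j ∣ q i := fun i j hij =>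
    Finset.prod_dvd_prod_of_subset _ _ _ fun x hx => by
      simp only [Finset.mem_filter, Finset.mem_univ, true_and] at hx ⊢
      exact hij.trans hx
  obtain ⟨R, c, hRu, h1, h2, h3⟩ := triang t q hqd (fun i => hA _ (hqA i))
    (V.submatrix Fin.castSucc Fin.castSucc)
    (fun k => RInv.prod e _ fun j hj => (hR j).mono (by simpa using hj))
    (fun i => V i.castSucc (Fin.last t))
  have ecc : ∀ i j : Fin t, (V * snocBlock R c) i.castSucc j.castSucc
      = (V.submatrix Fin.castSucc Fin.castSucc * R) i j := by
    intro i j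
    rw [Matrix.mul_apply, Fin.sum_univ_castSucc]
    simp [Matrix.mul_apply]
  have ecl : ∀ i : Fin t, (V * snocBlock R c) i.castSucc (Fin.last t)
      = (V.submatrix Fin.castSucc Fin.castSucc *ᵥ c) i + V i.castSucc (Fin.last t) := by
    intro i
    rw [Matrix.mul_apply, Fin.sum_univ_castSucc]
    simp [mulVec, dotProduct]
  obtain ⟨P, hP, hPD⟩ := assemble h hc q hq (V * snocBlock R c)
    (by rw [det_mul, snocBlock_det]; exact hV.mul hRu)
    (by
      intro i j hij
      cases j using Fin.lastCases with
      | last => rw [ecl]; exact h3 i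
      | cast j => rw [ecc]; exact h1 i j (by simpa using hij))
    (by intro i; rw [ecc]; exact h2 i)
  set E := Matrix.diagonal (fun i : Fin (t + 1) => if i = Fin.last t then z else 1) with hE
  have hQz : IsUnit (snocBlock R (z • c)).det := by rw [snocBlock_det]; exact hRu
  refine ⟨P, (snocBlock R (z • c))⁻¹, hP, ?_, ?_⟩
  · rw [Matrix.det_nonsing_inv]; exact hQz.ringInverse
  · have hDE : Matrix.diagonal (fun i : Fin (t + 1) => if i = Fin.last t then z * h i else h i)
        = Matrix.diagonal h * E := by
      rw [hE, Matrix.diagonal_mul_diagonal]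
      congr 1
      funext i
      split_ifs <;> ring
    have hB : Matrix.diagonal h * V * E * snocBlock R (z • c) = P * (Matrix.diagonal h * E) := by
      rw [Matrix.mul_assoc, ← snocBlock_comm, ← Matrix.mul_assoc, Matrix.mul_assoc _ V, hPD,
        Matrix.mul_assoc]
    rw [hDE, ← hB, Matrix.mul_assoc _ (snocBlock R (z • c)), Matrix.mul_nonsing_inv _ hQz,
      Matrix.mul_one]
end Assemble

section Supp
variable {K : Type*} [Field K] {n : ℕ}

open Classical in
noncomputable def killHom (K : Type*) [Field K] (s : Set (Fin n)) :
    MvPolynomial (Fin n) K →ₐ[K] MvPolynomial (Fin n) K :=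
  MvPolynomial.aeval fun i => if i ∈ s then X i else 0

theorem killHom_fix (s : Set (Fin n)) (p : MvPolynomial (Fin n) K) (hp : p ∈ supported K s) :
    killHom K s p = p := by
  rw [supported_eq_adjoin_X] at hp
  induction hp using Algebra.adjoin_induction with
  | mem x hx =>
    obtain ⟨i, hi, rfl⟩ := hx
    simp [killHom, hi]
  | algebraMap r => simp
  | add x y _ _ hx hy => rw [map_add, hx, hy]
  | mul x y _ _ hx hy => rw [map_mul, hx, hy]

theorem killHom_mem (s : Set (Fin n)) (p : MvPolynomial (Fin n) K) :
    killHom K s p ∈ supported K s := by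
  induction p using MvPolynomial.induction_on with
  | C a => 
    have : killHom K s (C a) = algebraMap K _ a := by simp [killHom]
    rw [this]; exact Subalgebra.algebraMap_mem _ a
  | add p q hp hq => rw [map_add]; exact add_mem hp hq
  | mul_X p i hp =>
    rw [map_mul]
    refine mul_mem hp ?_
    by_cases hi : i ∈ s
    · simpa [killHom, hi] using hi
    · simp [killHom, hi]
end Supp


theorem statement1 {K : Type*} [Field K] (n : ℕ) (hn : 2 ≤ n) (l : ℕ) (hl : 0 < l)
    (h : Fin l → MvPolynomial (Fin n) K)
    (hsup : ∀ i : Fin l, h i ∈ MvPolynomial.supported K {(⟨n - 1, by omega⟩ : Fin n)})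
    (hchain : ∀ i j : Fin l, i ≤ j → h i ∣ h j)
    (V : Matrix (Fin l) (Fin l) (MvPolynomial (Fin n) K))
    (hVsup : ∀ i j : Fin l, V i j ∈ MvPolynomial.supported K {t : Fin n | (t : ℕ) ≠ 0})
    (hVuni : IsUnit V.det)
    (B : Matrix (Fin l) (Fin l) (MvPolynomial (Fin n) K))
    (hB : B = Matrix.diagonal h * V *
      Matrix.diagonal (fun i : Fin l =>
        if (i : ℕ) = l - 1 then MvPolynomial.X (⟨0, by omega⟩ : Fin n) else 1))
    (hgcd : ∀ k : ℕ, 1 ≤ k → k ≤ l - 1 →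
      IsGcdMinors B k (∏ j ∈ Finset.univ.filter (fun j : Fin l => (j : ℕ) < k), h j) ∧
      reducedIdeal B k (∏ j ∈ Finset.univ.filter (fun j : Fin l => (j : ℕ) < k), h j) = ⊤) :
    MatEquiv B (Matrix.diagonal (fun i : Fin l =>
      if (i : ℕ) = l - 1 then MvPolynomial.X (⟨0, by omega⟩ : Fin n) * h i else h i)) := by
  obtain ⟨t, rfl⟩ : ∃ t, l = t + 1 := ⟨l - 1, by omega⟩
  set last : Fin n := ⟨n - 1, by omega⟩ with hlast
  have hif : ∀ (a b : Fin (t + 1) → MvPolynomial (Fin n) K),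
      (fun i : Fin (t + 1) => if (i : ℕ) = t + 1 - 1 then a i else b i)
        = fun i => if i = Fin.last t then a i else b i := by
    intro a b
    funext i
    simp [Fin.ext_iff]
  have hE := hif (fun _ => X ⟨0, by omega⟩) (fun _ => 1)
  have hE2 := hif (fun i => X ⟨0, by omega⟩ * h i) h
  rw [hE] at hB
  rw [hE2]
  subst hB
  refine master h hchain V hVuni (X ⟨0, by omega⟩) (killHom K {t : Fin n | (t : ℕ) ≠ 0}).toRingHom
    (fun i => killHom_fix _ _ (supported_mono (by simp [hlast]; omega) (hsup i)))
    (fun i j => killHom_fix _ _ (hVsup i j)) (by simp [killHom])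
    (supported K {last}).toSubsemiring
    (fun a ha => liftAt_last n last (by simp [hlast]; omega) a ha) ?_ ?_
  · intro i j hij
    obtain ⟨e, he⟩ := hchain i j hij
    refine ⟨killHom K {last} e, killHom_mem _ _, ?_⟩
    have := congrArg (killHom K {last}) he
    rwa [map_mul, killHom_fix _ _ (hsup i), killHom_fix _ _ (hsup j)] at this
  · intro j
    exact (hgcd (j + 1) (by omega) (by omega)).2
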